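/- arXiv:2208.14126 — 2 statements merged into one kernel-verified Lean document; each statement's English description precedes it below -/
import Mathlib

section
/- Let G be an n-vertex planar triconnected cubic graph with n ≥ 6, equipped with a vertex ordering τ such that every edge (v_i, v_j) satisfies |i − j| < 5 (viewing window ω = 5). Then G always admits a good embedding, i.e., an embedding (crossings interpreted as dummy vertices) with no critical cycle and in which no two coeval edges cross. -/
open Set

namespace GraphStories

/-- Points of the plane. -/
abbrev Pt : Type := ℝ × ℝ

/-- The vertex set of the window graph `G_i` (time `i` is 1-indexed, vertex
`v_j : Fin n` sits at position `j+1` in the ordering `τ`):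
`v_j ∈ G_i` iff `max{1, i-ω+1} ≤ j+1 ≤ i`. -/
def window (n ω i : ℕ) : Set (Fin n) := {j | j.val + 1 ≤ i ∧ i ≤ j.val + ω}

/-- All edges of `G` are visible: `|i - j| < ω` for every edge `(v_i, v_j)`. -/
def Visible (n ω : ℕ) (G : SimpleGraph (Fin n)) : Prop :=
  ∀ u v : Fin n, G.Adj u v → u.val < v.val + ω ∧ v.val < u.val + ω

/-- The data of a drawing: a position for every vertex, and a parametrized curve
for every (ordered) pair of vertices (only the data attached to the vertices and
edges of the relevant subgraph is meaningful). -/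
structure RawDrawing (n : ℕ) where
  pos : Fin n → Pt
  curve : Fin n → Fin n → ℝ → Pt

/-- `γ` (restricted to `[0,1]`) is a Jordan arc from `a` to `b`. -/
def IsArcFrom (γ : ℝ → Pt) (a b : Pt) : Prop :=
  ContinuousOn γ (Icc 0 1) ∧ InjOn γ (Icc 0 1) ∧ γ 0 = a ∧ γ 1 = b

/-- The set of points of an arc. -/
def arcBody (γ : ℝ → Pt) : Set Pt := γ '' Icc (0 : ℝ) 1

/-- The set of interior points of an arc (endpoints removed). -/
def arcInterior (γ : ℝ → Pt) : Set Pt := γ '' Ioo (0 : ℝ) 1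

/-- `D` is a planar drawing of the subgraph of `G` induced by `S`, with the
vertices mapped to (distinct) points of `P` and the edges drawn as Jordan arcs
which pairwise do not intersect except at common endpoints. -/
structure IsPlanarDrawingOn (n : ℕ) (G : SimpleGraph (Fin n)) (S : Set (Fin n))
    (P : Set Pt) (D : RawDrawing n) : Prop where
  pos_mem : ∀ v ∈ S, D.pos v ∈ P
  pos_inj : InjOn D.pos S
  curve_symm : ∀ u v : Fin n, D.curve v u = fun t => D.curve u v (1 - t)
  arc : ∀ u ∈ S, ∀ v ∈ S, G.Adj u v → IsArcFrom (D.curve u v) (D.pos u) (D.pos v)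
  vertex_off_arc : ∀ u ∈ S, ∀ v ∈ S, G.Adj u v → ∀ w ∈ S,
      D.pos w ∉ arcInterior (D.curve u v)
  no_cross : ∀ u ∈ S, ∀ v ∈ S, ∀ x ∈ S, ∀ y ∈ S, G.Adj u v → G.Adj x y →
      s(u, v) ≠ s(x, y) →
      arcInterior (D.curve u v) ∩ arcInterior (D.curve x y) = ∅

/-- `D` is a planar drawing of the subgraph of `G` induced by `S` (anywhere in
the plane). -/
def IsPlanarDrawing (n : ℕ) (G : SimpleGraph (Fin n)) (S : Set (Fin n))
    (D : RawDrawing n) : Prop :=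
  IsPlanarDrawingOn n G S univ D

/-- A realization of the graph story `(G, ω, k, τ)` on the point set `P`:
a sequence `Γ_1, …, Γ_n` of planar drawings of the window graphs `G_1, …, G_n`
on `P` (property R1) such that consecutive drawings restrict identically
(vertex positions and edge arcs) to the common subgraph `G_{i-1} ∩ G_i`
(property R2). -/
structure Realization (n ω : ℕ) (G : SimpleGraph (Fin n)) (P : Set Pt) where
  Γ : ℕ → RawDrawing n
  planar : ∀ i, 1 ≤ i → i ≤ n → IsPlanarDrawingOn n G (window n ω i) P (Γ i)
  pos_eq : ∀ i, 2 ≤ i → i ≤ n → ∀ v ∈ window n ω (i - 1) ∩ window n ω i,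
      (Γ i).pos v = (Γ (i - 1)).pos v
  curve_eq : ∀ i, 2 ≤ i → i ≤ n →
      ∀ u ∈ window n ω (i - 1) ∩ window n ω i,
      ∀ v ∈ window n ω (i - 1) ∩ window n ω i,
      G.Adj u v → (Γ i).curve u v = (Γ (i - 1)).curve u v

/-- The story `(G, ω, k, τ)` admits a realization on the point set `P`. -/
def RealizableOn (n ω : ℕ) (G : SimpleGraph (Fin n)) (P : Set Pt) : Prop :=
  Nonempty (Realization n ω G P)

/-- The story `(G, ω, k, τ)` is realizable: it admits a realization on some set
of `ω + k` points. -/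
def Realizable (n ω k : ℕ) (G : SimpleGraph (Fin n)) : Prop :=
  ∃ P : Finset Pt, P.card = ω + k ∧ RealizableOn n ω G ↑P


/-- The set of points of the plane used by the drawing `D` of the subgraph of
`G` induced by `S` (vertex points and edge arcs). -/
def drawingImage (n : ℕ) (G : SimpleGraph (Fin n)) (S : Set (Fin n))
    (D : RawDrawing n) : Set Pt :=
  (D.pos '' S) ∪
    ⋃ (u : Fin n) (v : Fin n) (_ : u ∈ S) (_ : v ∈ S) (_ : G.Adj u v),
      arcBody (D.curve u v)

/-- `D` is a drawing (an "embedding", possibly with crossings, which are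
interpreted as dummy vertices) of the whole graph `G`: vertices are mapped to
distinct points and edges to Jordan arcs joining their endpoints and avoiding
the other vertices. -/
structure IsDrawing (n : ℕ) (G : SimpleGraph (Fin n)) (D : RawDrawing n) : Prop where
  pos_inj : Function.Injective D.pos
  curve_symm : ∀ u v : Fin n, D.curve v u = fun t => D.curve u v (1 - t)
  arc : ∀ u v : Fin n, G.Adj u v → IsArcFrom (D.curve u v) (D.pos u) (D.pos v)
  vertex_off_arc : ∀ u v : Fin n, G.Adj u v → ∀ w : Fin n,
      D.pos w ∉ arcInterior (D.curve u v)

/-- Two vertices are coeval if some window graph `G_i` contains both. -/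
def Coeval (n ω : ℕ) (u v : Fin n) : Prop :=
  ∃ i, 1 ≤ i ∧ i ≤ n ∧ u ∈ window n ω i ∧ v ∈ window n ω i

/-- Two edges are coeval if some window graph `G_i` contains both of them. -/
def CoevalEdges (n ω : ℕ) (u v x y : Fin n) : Prop :=
  ∃ i, 1 ≤ i ∧ i ≤ n ∧ u ∈ window n ω i ∧ v ∈ window n ω i ∧
    x ∈ window n ω i ∧ y ∈ window n ω i

/-- A vertex is coeval with a cycle `c` if some window graph `G_i` contains the
vertex together with the whole cycle. -/
def CoevalWithCycle (n ω : ℕ) {G : SimpleGraph (Fin n)} {r : Fin n}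
    (c : G.Walk r r) (v : Fin n) : Prop :=
  ∃ i, 1 ≤ i ∧ i ≤ n ∧ v ∈ window n ω i ∧ ∀ u ∈ c.support, u ∈ window n ω i

/-- The set of points of the plane covered by the drawing of the cycle `c`. -/
def cycleImage (n : ℕ) {G : SimpleGraph (Fin n)} {r : Fin n}
    (D : RawDrawing n) (c : G.Walk r r) : Set Pt :=
  {p | ∃ u w : Fin n, s(u, w) ∈ c.edges ∧ p ∈ arcBody (D.curve u w)}

/-- The region of the plane lying inside a compact plane set `X`: the points
off `X` whose connected component in the complement of `X` is bounded. -/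
def insideRegion (X : Set Pt) : Set Pt :=
  {p | p ∉ X ∧ Bornology.IsBounded (connectedComponentIn Xᶜ p)}

/-- In the drawing `D`, the cycle `c` is critical for the vertex `v`
(window size `ω`): `v` is coeval with `c` and `v ∈ G(C) \ C`, i.e. `v` is not
on `c` and is drawn inside `c`. -/
def CriticalFor (n ω : ℕ) {G : SimpleGraph (Fin n)} {r : Fin n}
    (D : RawDrawing n) (c : G.Walk r r) (v : Fin n) : Prop :=
  CoevalWithCycle n ω c v ∧ v ∉ c.support ∧
    D.pos v ∈ insideRegion (cycleImage n D c)

/-- `c` is a critical cycle of `G` in the drawing `D`. -/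
def IsCriticalCycle (n ω : ℕ) {G : SimpleGraph (Fin n)} {r : Fin n}
    (D : RawDrawing n) (c : G.Walk r r) : Prop :=
  c.IsCycle ∧ ∃ v, CriticalFor n ω D c v

/-- `c` is the external cycle of the drawing `D` of `G`: nothing of the drawing
lies strictly outside `c` (every point of the drawing is on `c` or inside
`c`). -/
def IsExternalCycle (n : ℕ) (G : SimpleGraph (Fin n)) {r : Fin n}
    (D : RawDrawing n) (c : G.Walk r r) : Prop :=
  c.IsCycle ∧ ∀ p ∈ drawingImage n G univ D,
    p ∈ cycleImage n D c ∨ p ∈ insideRegion (cycleImage n D c)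

/-- A good embedding of `G` (window size `ω`): a drawing with no critical cycle
in which no two coeval edges cross. -/
def GoodEmbedding (n ω : ℕ) (G : SimpleGraph (Fin n)) (D : RawDrawing n) : Prop :=
  IsDrawing n G D ∧
  (∀ u v x y : Fin n, G.Adj u v → G.Adj x y → s(u, v) ≠ s(x, y) →
      CoevalEdges n ω u v x y →
      arcInterior (D.curve u v) ∩ arcInterior (D.curve x y) = ∅) ∧
  (∀ (r : Fin n) (c : G.Walk r r), c.IsCycle → ∀ v, ¬ CriticalFor n ω D c v)

/-- `G` (on `Fin n`) is a planar graph: it admits a planar drawing. -/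
def PlanarGraph (n : ℕ) (G : SimpleGraph (Fin n)) : Prop :=
  ∃ D : RawDrawing n, IsPlanarDrawing n G univ D

/-- `G` is triconnected: it has at least `4` vertices and removing any at most
two vertices leaves it connected. -/
def ThreeConnected (n : ℕ) (G : SimpleGraph (Fin n)) : Prop :=
  4 ≤ n ∧ ∀ s : Finset (Fin n), s.card ≤ 2 →
    (SimpleGraph.induce {v : Fin n | v ∉ s} G).Connected

/-- `G` is cubic: every vertex has degree three. -/
def Cubic (n : ℕ) (G : SimpleGraph (Fin n)) : Prop :=
  ∀ v : Fin n, (G.neighborSet v).ncard = 3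

/-!
If the vertices are placed on a parabola, every vertex is extreme among the points of the drawing,
so no cycle encloses a vertex, and two edges cross exactly when their ends interleave along the
parabola. It remains to place the vertices on a line so that coeval edges do not interleave.

The vertices are inserted in the given order. Among the vertices placed before it, a new one is
coeval with the last four only, so only their cyclic order matters; the induction keeps a gap
between two neighbours in this order into which the next vertex may be inserted. Such a gap exists
because a block of four consecutive vertices spans few edges: by triconnectivity at most one of its
vertices has no neighbour to the left of the block and at most one has none to the right, and all
degrees are three. A vertex of the block adjacent to the three others is excluded by planarity, as
contracting the two sides of the block would give a drawing of `K₃,₃`.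

That `K₃,₃` has no planar drawing is seen from the variations of `log (z - P)` along its edges, for
its vertices `P`: disjoint arcs impose linear relations between them that contradict the values of
their exponentials.
-/

/-! ### Drawings on a parabola -/

/-- `Interleave a b c d`: exactly one of `c`, `d` lies strictly between `a` and `b`, the other one
lying strictly outside. For points in convex position listed by these parameters, it says that the
chords `ab` and `cd` cross. The product form makes it false as soon as two ends coincide. -/
def Interleave (a b c d : ℝ) : Prop := (c - a) * (c - b) * ((d - a) * (d - b)) < 0

/-- The straight-line drawing with vertex `v` at the point of abscissa `p v` of the parabola
`y = x ^ 2`. -/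
def parabolaDrawing {n : ℕ} (p : Fin n → ℝ) : RawDrawing n where
  pos v := (p v, p v ^ 2)
  curve u v t := ((1 - t) * p u + t * p v, (1 - t) * p u ^ 2 + t * p v ^ 2)

section Parabola

variable {n : ℕ} {G : SimpleGraph (Fin n)} {p : Fin n → ℝ}

theorem convexCombination_ne_zero {x y s : ℝ} (hs₀ : 0 < s) (hs₁ : s < 1) (hxy : 0 ≤ x * y)
    (hne : x ≠ 0 ∨ y ≠ 0) : (1 - s) * x + s * y ≠ 0 := by
  intro h
  have hs : 0 < 1 - s := sub_pos.2 hs₁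
  rcases hne with hx | hy
  · have : (1 - s) * x ^ 2 + s * (x * y) = 0 := by linear_combination x * h
    have : 0 < (1 - s) * x ^ 2 := mul_pos hs (sq_pos_of_ne_zero hx)
    have : 0 ≤ s * (x * y) := mul_nonneg hs₀.le hxy
    linarith
  · have : (1 - s) * (x * y) + s * y ^ 2 = 0 := by linear_combination y * h
    have : 0 < s * y ^ 2 := mul_pos hs₀ (sq_pos_of_ne_zero hy)
    have : 0 ≤ (1 - s) * (x * y) := mul_nonneg hs.le hxy
    linarith

theorem parabolaDrawing_curve_above {u v : Fin n} (huv : p u ≠ p v) {t : ℝ}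
    (ht : t ∈ Ioo (0 : ℝ) 1) :
    ((parabolaDrawing p).curve u v t).1 ^ 2 < ((parabolaDrawing p).curve u v t).2 := by
  have : 0 < t * (1 - t) * (p u - p v) ^ 2 :=
    mul_pos (mul_pos ht.1 (sub_pos.2 ht.2)) (sq_pos_of_ne_zero (sub_ne_zero.2 huv))
  simp only [parabolaDrawing]
  linarith

theorem isDrawing_parabolaDrawing (hp : Function.Injective p) :
    IsDrawing n G (parabolaDrawing p) where
  pos_inj _ _ h := hp (Prod.ext_iff.1 h).1
  curve_symm u v := by
    funext t
    simp only [parabolaDrawing, Prod.mk.injEq]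
    constructor <;> ring
  arc u v huv := by
    refine ⟨Continuous.continuousOn ?_, ?_, ?_, ?_⟩
    · simp only [parabolaDrawing]
      fun_prop
    · intro s _ t _ hst
      simp only [parabolaDrawing, Prod.mk.injEq] at hst
      have : (s - t) * (p v - p u) = 0 := by linear_combination hst.1
      exact sub_eq_zero.1 ((mul_eq_zero.1 this).resolve_right
        (sub_ne_zero.2 fun h => huv.ne (hp h).symm))
    · simp [parabolaDrawing]
    · simp [parabolaDrawing]
  vertex_off_arc u v huv w := by
    rintro ⟨t, ht, htw⟩
    have habove := parabolaDrawing_curve_above (fun h => huv.ne (hp h)) ht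
    rw [htw] at habove
    exact lt_irrefl _ habove

theorem below_vertex_notMem_cycleImage (hp : Function.Injective p) {r : Fin n}
    {c : G.Walk r r} {v : Fin n} (hv : v ∉ c.support) {s : ℝ} (hs : 0 ≤ s) :
    (p v, p v ^ 2 - s) ∉ cycleImage n (parabolaDrawing p) c := by
  rintro ⟨u, w, huw, t, ht, he⟩
  have off : ∀ x ∈ c.support, p v ≠ p x := fun x hx h => hv (hp h ▸ hx)
  rcases eq_or_lt_of_le ht.1 with rfl | ht₀
  · exact off u (c.fst_mem_support_of_mem_edges huw)
      (by simpa [parabolaDrawing] using (congrArg Prod.fst he).symm)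
  rcases eq_or_lt_of_le ht.2 with rfl | ht₁
  · exact off w (c.snd_mem_support_of_mem_edges huw)
      (by simpa [parabolaDrawing] using (congrArg Prod.fst he).symm)
  have := parabolaDrawing_curve_above (fun h => (c.adj_of_mem_edges huw).ne (hp h)) ⟨ht₀, ht₁⟩
  rw [he] at this
  dsimp only at this
  linarith

theorem pos_notMem_insideRegion_cycleImage (hp : Function.Injective p) {r : Fin n}
    {c : G.Walk r r} {v : Fin n} (hv : v ∉ c.support) :
    (parabolaDrawing p).pos v ∉ insideRegion (cycleImage n (parabolaDrawing p) c) := by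
  rintro ⟨-, hbounded⟩
  let ray : Set Pt := (fun s : ℝ => ((p v, p v ^ 2 - s) : Pt)) '' Ici 0
  have hconn : IsPreconnected ray := (convex_Ici 0).isPreconnected.image _ (by fun_prop)
  have hsub : ray ⊆ (cycleImage n (parabolaDrawing p) c)ᶜ := by
    rintro _ ⟨s, hs, rfl⟩
    exact below_vertex_notMem_cycleImage hp hv hs
  have hpos : (parabolaDrawing p).pos v ∈ ray := ⟨0, self_mem_Ici, by simp [parabolaDrawing]⟩
  obtain ⟨b, hb⟩ := (LipschitzWith.prod_snd.isBounded_image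
    (hbounded.subset (hconn.subset_connectedComponentIn hpos hsub))).bddBelow
  have : b ≤ p v ^ 2 - (|p v ^ 2 - b| + 1) :=
    hb ⟨_, ⟨|p v ^ 2 - b| + 1, mem_Ici.2 (by positivity), rfl⟩, rfl⟩
  linarith [le_abs_self (p v ^ 2 - b)]

theorem disjoint_arcInterior_parabolaDrawing (hp : Function.Injective p) {u v x y : Fin n}
    (huv : u ≠ v) (hxy : x ≠ y) (hne : s(u, v) ≠ s(x, y))
    (h : ¬ Interleave (p u) (p v) (p x) (p y)) :
    arcInterior ((parabolaDrawing p).curve u v) ∩ arcInterior ((parabolaDrawing p).curve x y) =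
      ∅ := by
  rw [Set.eq_empty_iff_forall_notMem]
  rintro _ ⟨⟨t, -, rfl⟩, ⟨s, hs, he⟩⟩
  simp only [parabolaDrawing, Prod.mk.injEq] at he
  -- `Y - (p u + p v) * X + p u * p v` vanishes on the chord `uv` and equals
  -- `(p z - p u) * (p z - p v)` at a vertex `z`.
  refine convexCombination_ne_zero hs.1 hs.2 (not_lt.1 h) ?_
    (show (1 - s) * ((p x - p u) * (p x - p v)) + s * ((p y - p u) * (p y - p v)) = 0 by
      linear_combination he.2 - (p u + p v) * he.1)
  by_contra! ⟨hx, hy⟩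
  simp only [mul_eq_zero, sub_eq_zero, hp.eq_iff] at hx hy
  rcases hx with rfl | rfl <;> rcases hy with rfl | rfl <;> simp_all [Sym2.eq_swap]

theorem exists_goodEmbedding_of_not_interleave {ω : ℕ} (hp : Function.Injective p)
    (h : ∀ u v x y : Fin n, G.Adj u v → G.Adj x y → CoevalEdges n ω u v x y →
      ¬ Interleave (p u) (p v) (p x) (p y)) :
    ∃ D : RawDrawing n, GoodEmbedding n ω G D :=
  ⟨parabolaDrawing p, isDrawing_parabolaDrawing hp,
    fun u v x y huv hxy hne hco =>
      disjoint_arcInterior_parabolaDrawing hp huv.ne hxy.ne hne (h u v x y huv hxy hco),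
    fun _ _ _ _ hv => pos_notMem_insideRegion_cycleImage hp hv.2.1 hv.2.2⟩

end Parabola

/-! ### Variation of the logarithm and the complete bipartite graph `K₃,₃` -/

section LogVariation

open Complex

theorem exists_continuous_log {A : Type*} [TopologicalSpace A] [SimplyConnectedSpace A]
    [LocallyPathConnectedSpace A] {f : A → ℂ} (hf : Continuous f) (hf₀ : ∀ a, f a ≠ 0) :
    ∃ g : A → ℂ, Continuous g ∧ ∀ a, exp (g a) = f a := by
  obtain ⟨a₀⟩ : Nonempty A := inferInstance
  obtain ⟨g, ⟨-, hg⟩, -⟩ := isCoveringMapOn_exp.existsUnique_continuousMap_lifts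
    (⟨f, hf⟩ : C(A, ℂ)) (a₀ := a₀) (e₀ := log (f a₀)) (by simp [exp_log (hf₀ a₀)])
    (by simpa using hf₀)
  exact ⟨g, g.continuous, congrFun hg⟩

theorem sub_eq_sub_of_exp_eq_exp {g₁ g₂ : ℝ → ℂ} (h₁ : Continuous g₁) (h₂ : Continuous g₂)
    (h : ∀ t, exp (g₁ t) = exp (g₂ t)) (a b : ℝ) : g₁ b - g₁ a = g₂ b - g₂ a := by
  have hlift : (⟨g₁, h₁⟩ : C(ℝ, ℂ)) = ⟨fun t => g₂ t + (g₁ a - g₂ a), by fun_prop⟩ :=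
    (isCoveringMapOn_exp.existsUnique_continuousMap_lifts
      (⟨fun t => exp (g₁ t), by fun_prop⟩ : C(ℝ, ℂ)) (a₀ := a) (e₀ := g₁ a)
      (by simp) (by simp)).unique
      ⟨rfl, rfl⟩ ⟨by simp, by funext t; simp [exp_add, exp_sub, h a, h t]⟩
  have : g₁ b = g₂ b + (g₁ a - g₂ a) := DFunLike.congr_fun hlift b
  linear_combination this

open Classical in
/-- The total variation over `[0, 1]` of a continuous logarithm of the nowhere vanishing continuous
function `f` (`0` if `f` has no continuous logarithm). -/
noncomputable def logVariation (f : ℝ → ℂ) : ℂ :=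
  if h : ∃ g : ℝ → ℂ, Continuous g ∧ ∀ t, exp (g t) = f t then h.choose 1 - h.choose 0 else 0

theorem logVariation_eq {f g : ℝ → ℂ} (hg : Continuous g) (h : ∀ t, exp (g t) = f t) :
    logVariation f = g 1 - g 0 := by
  have hex : ∃ g : ℝ → ℂ, Continuous g ∧ ∀ t, exp (g t) = f t := ⟨g, hg, h⟩
  rw [logVariation, dif_pos hex]
  exact sub_eq_sub_of_exp_eq_exp hex.choose_spec.1 hg
    (fun t => (hex.choose_spec.2 t).trans (h t).symm) 0 1

theorem exp_logVariation {f : ℝ → ℂ} (hf : Continuous f) (hf₀ : ∀ t, f t ≠ 0) :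
    exp (logVariation f) = f 1 / f 0 := by
  obtain ⟨g, hg, hgf⟩ := exists_continuous_log hf hf₀
  rw [logVariation_eq hg hgf, exp_sub, hgf, hgf]

-- Both sides are the variation of `log (γ s - δ t)` from `(0, 0)` to `(1, 1)`.
theorem logVariation_square {γ δ : ℝ → ℂ} (hγ : Continuous γ) (hδ : Continuous δ)
    (hne : ∀ s t, γ s ≠ δ t) :
    logVariation (fun s => γ s - δ 0) + logVariation (fun t => δ t - γ 1) =
      logVariation (fun s => γ s - δ 1) + logVariation (fun t => δ t - γ 0) := by
  obtain ⟨L, hL, hexp⟩ := exists_continuous_log (f := fun q : ℝ × ℝ => γ q.1 - δ q.2)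
    (by fun_prop) fun q => sub_ne_zero.2 (hne _ _)
  rw [logVariation_eq (g := fun s => L (s, 0)) (by fun_prop) fun s => hexp _,
    logVariation_eq (g := fun s => L (s, 1)) (by fun_prop) fun s => hexp _,
    logVariation_eq (g := fun t => L (1, t) + Real.pi * I) (by fun_prop) fun t => by
      rw [exp_add, hexp, exp_pi_mul_I]; ring,
    logVariation_eq (g := fun t => L (0, t) + Real.pi * I) (by fun_prop) fun t => by
      rw [exp_add, hexp, exp_pi_mul_I]; ring]
  ring

theorem exp_sum_sub_eq_neg {p p' : ℂ} {Q v v' : Fin 3 → ℂ} (hp : p ≠ p') (hpQ : ∀ j, p ≠ Q j)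
    (hv : ∀ j, exp (v j) = (Q j - p') / (p - p'))
    (hv' : ∀ j, exp (v' j) = (Q j - p) / (p' - p)) :
    exp (∑ j, (v j - v' j)) = -((∏ j, (p' - Q j)) / ∏ j, (p - Q j)) := by
  have hterm : ∀ j, exp (v j - v' j) = -((p' - Q j) / (p - Q j)) := fun j => by
    rw [exp_sub, hv, hv', div_div_div_eq, ← neg_div, div_eq_div_iff
      (mul_ne_zero (sub_ne_zero.2 hp) (sub_ne_zero.2 (hpQ j).symm)) (sub_ne_zero.2 (hpQ j))]
    ring
  simp only [exp_sum, hterm, Finset.prod_neg, Finset.prod_div_distrib]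
  norm_num

theorem exp_sum_add_eq_div {p : ℂ} {Q : Fin 3 → ℂ} {W : Fin 3 → Fin 3 → ℂ}
    (hW : ∀ j j', j' ≠ j → exp (W j j') = (Q j - Q j') / (p - Q j')) :
    exp (∑ j, (W j (j + 1) + W j (j + 2))) =
      (∏ j, (Q j - Q (j + 1)) * (Q j - Q (j + 2))) / (∏ j, (p - Q j)) ^ 2 := by
  have hterm : ∀ j, exp (W j (j + 1) + W j (j + 2)) = (Q j - Q (j + 1)) * (Q j - Q (j + 2)) /
      ((p - Q (j + 1)) * (p - Q (j + 2))) := fun j => by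
    rw [exp_add, hW j (j + 1) (by simp), hW j (j + 2) (by simp), div_mul_div_comm]
  simp only [exp_sum, hterm, Finset.prod_div_distrib]
  congr 1
  simp only [Fin.prod_univ_three, Fin.isValue, Fin.reduceAdd, zero_add]
  ring

/-- `V i j i'` and `W i j j'` stand for the variations of `log (· - P i')` and `log (· - Q j')`
along an arc from `P i` to `Q j`. After summing the relations, the exponential of the result reads
`-1 = 1`. -/
theorem no_logVariation_cocycle {P Q : Fin 3 → ℂ} {V W : Fin 3 → Fin 3 → Fin 3 → ℂ}
    (hP : Function.Injective P) (hQ : Function.Injective Q) (hPQ : ∀ i j, P i ≠ Q j)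
    (hV : ∀ i j i', i' ≠ i → exp (V i j i') = (Q j - P i') / (P i - P i'))
    (hW : ∀ i j j', j' ≠ j → exp (W i j j') = (Q j - Q j') / (P i - Q j'))
    (hVW : ∀ i i' j j', i ≠ i' → j ≠ j' → V i j i' + W i' j' j = W i j j' + V i' j' i) :
    False := by
  let A (i i' : Fin 3) : ℂ := ∑ j, (V i j i' - V i' j i)
  let B (i : Fin 3) : ℂ := ∑ j, (W i j (j + 1) + W i j (j + 2))
  let D (i : Fin 3) : ℂ := ∏ j, (P i - Q j)
  have hD : ∀ i, D i ≠ 0 := fun i => Finset.prod_ne_zero_iff.2 fun j _ => sub_ne_zero.2 (hPQ i j)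
  have hAB : ∀ i i', i ≠ i' → 2 * A i i' = B i - B i' := by
    intro i i' hi
    have hrel : ∀ j, (V i j i' + W i' (j + 1) j) + (V i j i' + W i' (j + 2) j) =
        (W i j (j + 1) + V i' (j + 1) i) + (W i j (j + 2) + V i' (j + 2) i) := fun j => by
      rw [hVW i i' j (j + 1) hi (by simp), hVW i i' j (j + 2) hi (by simp)]
    have hsum := Finset.sum_congr (Eq.refl Finset.univ) fun j _ => hrel j
    simp only [A, B, Fin.sum_univ_three, Fin.isValue, Fin.reduceAdd, zero_add] at hsum ⊢
    linear_combination hsum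
  have hexpA : ∀ i i', i ≠ i' → exp (A i i') = -(D i' / D i) := fun i i' hi =>
    exp_sum_sub_eq_neg (hP.ne hi) (hPQ i) (fun j => hV i j i' hi.symm) fun j => hV i' j i hi
  have hexpB : ∀ i, exp (B i) = (∏ j, (Q j - Q (j + 1)) * (Q j - Q (j + 2))) / D i ^ 2 :=
    fun i => exp_sum_add_eq_div (hW i)
  have hΔ : ∏ j, (Q j - Q (j + 1)) * (Q j - Q (j + 2)) ≠ 0 :=
    Finset.prod_ne_zero_iff.2 fun j _ =>
      mul_ne_zero (sub_ne_zero.2 (hQ.ne (by simp))) (sub_ne_zero.2 (hQ.ne (by simp)))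
  have hsum : A 0 1 + A 0 2 + A 1 2 = B 0 - B 2 := by
    linear_combination (hAB 0 1 (by decide) + hAB 0 2 (by decide) + hAB 1 2 (by decide)) / 2
  have hexp := congrArg exp hsum
  rw [exp_add, exp_add, exp_sub, hexpA 0 1 (by decide), hexpA 0 2 (by decide),
    hexpA 1 2 (by decide), hexpB, hexpB] at hexp
  have hminus : -(D 1 / D 0) * -(D 2 / D 0) * -(D 2 / D 1) = -(D 2 ^ 2 / D 0 ^ 2) := by
    field_simp [hD 0, hD 1, hD 2]
  rw [hminus, div_div_div_cancel_left' _ _ hΔ] at hexp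
  exact div_ne_zero (pow_ne_zero 2 (hD 2)) (pow_ne_zero 2 (hD 0)) (neg_eq_self.1 hexp)

theorem not_exists_K33_arcs {P Q : Fin 3 → ℂ} {γ : Fin 3 → Fin 3 → ℝ → ℂ}
    (hγ : ∀ i j, Continuous (γ i j)) (h₀ : ∀ i j, γ i j 0 = P i) (h₁ : ∀ i j, γ i j 1 = Q j)
    (hne : ∀ i i' j j', i ≠ i' → j ≠ j' → ∀ s t, γ i j s ≠ γ i' j' t) : False := by
  have hP : Function.Injective P := fun i i' h => by
    by_contra hi
    exact hne i i' 0 1 hi (by decide) 0 0 (by rw [h₀, h₀, h])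
  have hQ : Function.Injective Q := fun j j' h => by
    by_contra hj
    exact hne 0 1 j j' (by decide) hj 1 1 (by rw [h₁, h₁, h])
  have hγP : ∀ i j i', i' ≠ i → ∀ t, γ i j t ≠ P i' := fun i j i' hi t => by
    obtain ⟨j', hj⟩ := exists_ne j
    exact h₀ i' j' ▸ hne i i' j j' hi.symm hj.symm t 0
  have hγQ : ∀ i j j', j' ≠ j → ∀ t, γ i j t ≠ Q j' := fun i j j' hj t => by
    obtain ⟨i', hi⟩ := exists_ne i
    exact h₁ i' j' ▸ hne i i' j j' hi.symm hj.symm t 1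
  have hPQ : ∀ i j, P i ≠ Q j := fun i j => by
    obtain ⟨j', hj⟩ := exists_ne j
    exact h₀ i j' ▸ hγQ i j' j hj.symm 0
  refine no_logVariation_cocycle (V := fun i j i' => logVariation fun t => γ i j t - P i')
    (W := fun i j j' => logVariation fun t => γ i j t - Q j') hP hQ hPQ ?_ ?_ ?_
  · intro i j i' hi
    rw [exp_logVariation (by fun_prop) fun t => sub_ne_zero.2 (hγP i j i' hi t), h₀, h₁]
  · intro i j j' hj
    rw [exp_logVariation (by fun_prop) fun t => sub_ne_zero.2 (hγQ i j j' hj t), h₀, h₁]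
  · intro i i' j j' hi hj
    simpa only [h₀, h₁] using logVariation_square (hγ i j) (hγ i' j') (hne i i' j j' hi hj)

end LogVariation

/-! ### Planar graphs have no `K₃,₃` minor -/

theorem drawingImage_mono {n : ℕ} {G : SimpleGraph (Fin n)} {D : RawDrawing n}
    {S T : Set (Fin n)} (h : S ⊆ T) : drawingImage n G S D ⊆ drawingImage n G T D :=
  union_subset_union (image_mono h) <| iUnion₂_mono fun _ _ =>
    iUnion_mono' fun hu => ⟨h hu, iUnion_mono' fun hv => ⟨h hv, subset_rfl⟩⟩

namespace IsPlanarDrawing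

variable {n : ℕ} {G : SimpleGraph (Fin n)} {D : RawDrawing n} {S T : Set (Fin n)}

theorem mem_drawingImage (hD : IsPlanarDrawing n G univ D) {x : Pt}
    (hx : x ∈ drawingImage n G S D) :
    (∃ v ∈ S, D.pos v = x) ∨ ∃ u ∈ S, ∃ v ∈ S, G.Adj u v ∧ x ∈ arcInterior (D.curve u v) := by
  rcases hx with hx | hx
  · exact Or.inl hx
  simp only [mem_iUnion] at hx
  obtain ⟨u, v, hu, hv, huv, t, ht, rfl⟩ := hx
  obtain ⟨-, -, hzero, hone⟩ := hD.arc u (mem_univ _) v (mem_univ _) huv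
  rcases eq_or_lt_of_le ht.1 with rfl | ht₀
  · exact Or.inl ⟨u, hu, hzero.symm⟩
  rcases eq_or_lt_of_le ht.2 with rfl | ht₁
  · exact Or.inl ⟨v, hv, hone.symm⟩
  exact Or.inr ⟨u, hu, v, hv, huv, t, ⟨ht₀, ht₁⟩, rfl⟩

theorem disjoint_drawingImage (hD : IsPlanarDrawing n G univ D) (hST : Disjoint S T) :
    Disjoint (drawingImage n G S D) (drawingImage n G T D) := by
  rw [Set.disjoint_left] at hST ⊢
  intro x hxS hxT
  rcases hD.mem_drawingImage hxS with ⟨v, hv, rfl⟩ | ⟨u, hu, v, -, huv, hxuv⟩ <;>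
    rcases hD.mem_drawingImage hxT with ⟨w, hw, hxw⟩ | ⟨w, hw, y, hy, hwy, hxwy⟩
  · exact hST hv (hD.pos_inj (mem_univ _) (mem_univ _) hxw ▸ hw)
  · exact hD.vertex_off_arc w (mem_univ _) y (mem_univ _) hwy v (mem_univ _) hxwy
  · exact hD.vertex_off_arc u (mem_univ _) v (mem_univ _) huv w (mem_univ _) (hxw ▸ hxuv)
  · have hne : s(u, v) ≠ s(w, y) := by
      intro h
      rcases Sym2.eq_iff.1 h with ⟨rfl, -⟩ | ⟨rfl, -⟩
      · exact hST hu hw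
      · exact hST hu hy
    exact (hD.no_cross u (mem_univ _) v (mem_univ _) w (mem_univ _) y (mem_univ _) huv hwy
      hne).subset ⟨hxuv, hxwy⟩

theorem joinedIn_of_adj (hD : IsPlanarDrawing n G univ D) {u v : Fin n} (hu : u ∈ S)
    (hv : v ∈ S) (huv : G.Adj u v) :
    JoinedIn (drawingImage n G S D) (D.pos u) (D.pos v) := by
  obtain ⟨hcont, -, hzero, hone⟩ := hD.arc u (mem_univ _) v (mem_univ _) huv
  refine JoinedIn.ofLine hcont hzero hone fun x hx => Or.inr ?_
  simp only [mem_iUnion]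
  exact ⟨u, v, hu, hv, huv, hx⟩

theorem joinedIn_of_reachable (hD : IsPlanarDrawing n G univ D) {u v : S}
    (h : (G.induce S).Reachable u v) :
    JoinedIn (drawingImage n G S D) (D.pos u) (D.pos v) := by
  obtain ⟨walk⟩ := h
  induction walk with
  | nil => exact JoinedIn.refl (Or.inl (mem_image_of_mem _ (Subtype.coe_prop _)))
  | cons hadj _ ih =>
    exact (hD.joinedIn_of_adj (Subtype.coe_prop _) (Subtype.coe_prop _) hadj).trans ih

theorem false_of_joinedIn (hD : IsPlanarDrawing n G univ D) {P Q : Fin 3 → Fin n}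
    {S : Fin 3 → Fin 3 → Set (Fin n)}
    (hjoin : ∀ i j, JoinedIn (drawingImage n G (S i j) D) (D.pos (P i)) (D.pos (Q j)))
    (hdisj : ∀ i i' j j', i ≠ i' → j ≠ j' → Disjoint (S i j) (S i' j')) : False := by
  let e := Complex.equivRealProdCLM.symm
  refine not_exists_K33_arcs (γ := fun i j t => e ((hjoin i j).somePath.extend t))
    (P := fun i => e (D.pos (P i))) (Q := fun j => e (D.pos (Q j)))
    (fun i j => e.continuous.comp (hjoin i j).somePath.continuous_extend)
    (fun i j => by simp) (fun i j => by simp) fun i i' j j' hi hj s t h => ?_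
  have hmem : ∀ i j t, (hjoin i j).somePath.extend t ∈ drawingImage n G (S i j) D :=
    fun i j t => (hjoin i j).somePath_mem _
  exact (hD.disjoint_drawingImage (hdisj i i' j j' hi hj)).ne_of_mem (hmem i j s) (hmem i' j' t)
    (e.injective h)

end IsPlanarDrawing

theorem PlanarGraph.false_of_K33_branchSets {n : ℕ} {G : SimpleGraph (Fin n)}
    (hG : PlanarGraph n G) {X : Fin 3 → Set (Fin n)} {Q : Fin 3 → Fin n}
    (hX : ∀ i, (G.induce (X i)).Preconnected) (hXX : Pairwise fun i i' => Disjoint (X i) (X i'))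
    (hQ : Function.Injective Q) (hQX : ∀ i j, Q j ∉ X i)
    (hadj : ∀ i j, ∃ v ∈ X i, G.Adj (Q j) v) : False := by
  obtain ⟨D, hD⟩ := hG
  choose v hv hQv using hadj
  refine hD.false_of_joinedIn (P := fun i => v i 0) (Q := Q) (S := fun i j => insert (Q j) (X i))
    (fun i j => ?_) fun i i' j j' hi hj => ?_
  · have hreach := hD.joinedIn_of_reachable (hX i ⟨v i 0, hv i 0⟩ ⟨v i j, hv i j⟩)
    exact (hreach.mono (drawingImage_mono (subset_insert _ _))).trans
      (hD.joinedIn_of_adj (mem_insert_of_mem _ (hv i j)) (mem_insert _ _) (hQv i j).symm)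
  · simp [Set.disjoint_insert_left, Set.disjoint_insert_right, hXX hi, hQX, hQ.eq_iff, hj.symm]

/-! ### Blocks of four consecutive vertices -/

/-- The vertices sharing a window of length five with the vertex `j + 4` and preceding it. -/
def block (n j : ℕ) : Finset (Fin n) := {k | j ≤ k.val ∧ k.val < j + 4}

/-- `k` has a neighbour among the first `m` vertices. -/
def AdjBefore {n : ℕ} (G : SimpleGraph (Fin n)) (m : ℕ) (k : Fin n) : Prop :=
  ∃ u : Fin n, u.val < m ∧ G.Adj k u

/-- `k` has a neighbour that is not among the first `m` vertices. -/
def AdjFrom {n : ℕ} (G : SimpleGraph (Fin n)) (m : ℕ) (k : Fin n) : Prop :=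
  ∃ u : Fin n, m ≤ u.val ∧ G.Adj k u

/-- The constraints that cubicity, triconnectivity and planarity put on the edges inside a block `B`
of consecutive vertices; `L` and `R` tell which vertices have a neighbour to the left, resp. to the
right, of the block. -/
structure IsTightBlock {V : Type*} (G : SimpleGraph V) (B : Finset V) (L R : V → Prop) :
    Prop where
  left_or : ∀ {a b}, a ∈ B → b ∈ B → a ≠ b → L a ∨ L b
  right_or : ∀ {a b}, a ∈ B → b ∈ B → a ≠ b → R a ∨ R b
  not_left : ∀ {a b c}, b ∈ B → c ∈ B → b ≠ c → G.Adj a b → G.Adj a c → R a → ¬ L a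
  star : ∀ {a b c d}, a ∈ B → b ∈ B → c ∈ B → d ∈ B → b ≠ c → b ≠ d → c ≠ d →
    G.Adj a b → G.Adj a c → ¬ G.Adj a d

namespace IsTightBlock

variable {V : Type*} {G : SimpleGraph V} {B : Finset V} {L R : V → Prop} {a b c d : V}

theorem triangle (h : IsTightBlock G B L R) (ha : a ∈ B) (hb : b ∈ B) (hc : c ∈ B)
    (hab : G.Adj a b) (hac : G.Adj a c) (hbc : G.Adj b c) (hRa : R a) : ¬ R b := fun hRb =>
  (h.left_or ha hb hab.ne).elim (h.not_left hb hc hbc.ne hab hac hRa)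
    (h.not_left ha hc hac.ne hab.symm hbc hRb)

theorem four_cycle (h : IsTightBlock G B L R) (ha : a ∈ B) (hb : b ∈ B) (hc : c ∈ B) (hd : d ∈ B)
    (hac : a ≠ c) (hbd : b ≠ d) (hab : G.Adj a b) (hbc : G.Adj b c) (hcd : G.Adj c d) :
    ¬ G.Adj d a := by
  intro hda
  have hRL : ∀ {p q}, p ∈ B → q ∈ B → p ≠ q → R p → R q → (R p → ¬ L p) → (R q → ¬ L q) →
      False := fun hp hq hpq hRp hRq hp' hq' => (h.left_or hp hq hpq).elim (hp' hRp) (hq' hRq)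
  have hLa := h.not_left hb hd hbd hab hda.symm
  have hLb := h.not_left ha hc hac hab.symm hbc
  have hLc := h.not_left hb hd hbd hbc.symm hcd
  have hLd := h.not_left ha hc hac hda hcd.symm
  rcases h.right_or ha hc hac with hRa | hRc <;> rcases h.right_or hb hd hbd with hRb | hRd
  · exact hRL ha hb hab.ne hRa hRb hLa hLb
  · exact hRL ha hd hda.ne' hRa hRd hLa hLd
  · exact hRL hc hb hbc.ne' hRc hRb hLc hLb
  · exact hRL hc hd hcd.ne hRc hRd hLc hLd

end IsTightBlock

section Connectivity

variable {n : ℕ} {G : SimpleGraph (Fin n)}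

theorem Cubic.eq_or_eq_or_eq (hG : Cubic n G) {v a b c d : Fin n} (hab : a ≠ b) (hac : a ≠ c)
    (hbc : b ≠ c) (ha : G.Adj v a) (hb : G.Adj v b) (hc : G.Adj v c) (hd : G.Adj v d) :
    d = a ∨ d = b ∨ d = c := by
  have hsub : {a, b, c} ⊆ G.neighborSet v := by
    rintro w (rfl | rfl | rfl) <;> assumption
  have hcard : ({a, b, c} : Set (Fin n)).ncard = 3 := by
    rw [← Finset.card_eq_three.2 ⟨a, b, c, hab, hac, hbc, rfl⟩, ← Set.ncard_coe_finset]
    simp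
  have heq := Set.eq_of_subset_of_ncard_le hsub ((hG v).trans hcard.symm).le
  have : d ∈ ({a, b, c} : Set (Fin n)) := heq ▸ hd
  simpa using this

theorem ThreeConnected.exists_adj (hG : ThreeConnected n G) {A : Set (Fin n)}
    {s : Finset (Fin n)} (hs : s.card ≤ 2) {a c : Fin n} (ha : a ∈ A) (has : a ∉ s) (hc : c ∉ A)
    (hcs : c ∉ s) : ∃ u ∈ A, u ∉ s ∧ ∃ v ∉ A, v ∉ s ∧ G.Adj u v := by
  obtain ⟨walk⟩ := (hG.2 s hs).preconnected ⟨a, has⟩ ⟨c, hcs⟩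
  obtain ⟨⟨⟨u, v⟩, huv⟩, -, hu, hv⟩ := walk.exists_boundary_dart (Subtype.val ⁻¹' A) ha hc
  exact ⟨u, hu, u.2, v, hv, v.2, huv⟩

/-- If `G.induce A` were disconnected, one of its two sides would miss the neighbour of `q`, and
`s` would separate it from `c`. -/
theorem ThreeConnected.preconnected_induce (hG : ThreeConnected n G) {A : Set (Fin n)}
    {s : Finset (Fin n)} (hs : s.card ≤ 2) {q c : Fin n} (hsA : ∀ v ∈ A, v ∉ s) (hcA : c ∉ A)
    (hcs : c ∉ s) (hA : ∀ u ∈ A, ∀ v ∉ A, G.Adj u v → v = q ∨ v ∈ s)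
    (hq : ∀ u ∈ A, ∀ v ∈ A, G.Adj u q → G.Adj v q → u = v) : (G.induce A).Preconnected := by
  have touches : ∀ E ⊆ A, (∀ u ∈ E, ∀ v ∈ A, G.Adj u v → v ∈ E) → E.Nonempty →
      ∃ u ∈ E, G.Adj u q := by
    rintro E hEA hE ⟨e, he⟩
    obtain ⟨u, hu, -, v, hv, hvs, huv⟩ :=
      hG.exists_adj hs he (hsA e (hEA he)) (fun hc => hcA (hEA hc)) hcs
    obtain rfl | hvs' := hA u (hEA hu) v (fun hvA => hv (hE u hu v hvA huv)) huv
    · exact ⟨u, hu, huv⟩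
    · exact absurd hvs' hvs
  intro a b
  by_contra hab
  let E : Set (Fin n) := {v | ∃ hv : v ∈ A, (G.induce A).Reachable a ⟨v, hv⟩}
  have hE : ∀ u ∈ E, ∀ v ∈ A, G.Adj u v → v ∈ E := fun u ⟨hu, hau⟩ v hv huv =>
    ⟨hv, hau.trans (SimpleGraph.Adj.reachable (G := G.induce A) (u := ⟨u, hu⟩) (v := ⟨v, hv⟩) huv)⟩
  obtain ⟨u, hu, huq⟩ := touches E (fun _ hv => hv.1) hE ⟨a, a.2, .refl _⟩
  obtain ⟨v, hv, hvq⟩ := touches (A \ E) sdiff_subset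
    (fun u hu v hv huv => ⟨hv, fun hvE => hu.2 (hE v hvE u hu.1 huv.symm)⟩)
    ⟨b, b.2, fun hb => hab hb.2⟩
  exact hv.2 (hq u hu.1 v hv.1 huq hvq ▸ hu)

theorem mem_block {j : ℕ} {k : Fin n} : k ∈ block n j ↔ j ≤ k.val ∧ k.val < j + 4 := by
  simp [block]

theorem card_block_le (j : ℕ) : (block n j).card ≤ 4 := by
  have : (block n j).card ≤ (Finset.Ico j (j + 4)).card :=
    Finset.card_le_card_of_injOn Fin.val (fun k hk => by simpa [mem_block] using hk)
      Fin.val_injective.injOn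
  simpa using this

theorem card_block {j : ℕ} (hj : j + 4 ≤ n) : (block n j).card = 4 := by
  have : block n j = (Finset.Ico j (j + 4)).attachFin fun k hk => by grind := by
    ext k
    simp [mem_block]
  rw [this, Finset.card_attachFin, Nat.card_Ico, Nat.add_sub_cancel_left]

theorem card_block_erase_erase_le {j : ℕ} {a b : Fin n} (ha : a ∈ block n j) (hb : b ∈ block n j)
    (hab : a ≠ b) : (((block n j).erase a).erase b).card ≤ 2 := by
  have := card_block_le (n := n) j
  rw [Finset.card_erase_of_mem (Finset.mem_erase.2 ⟨hab.symm, hb⟩), Finset.card_erase_of_mem ha]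
  lia

theorem Visible.adjFrom_or_adjFrom (hvis : Visible n 5 G) (h3 : ThreeConnected n G) {j : ℕ}
    (hj : j + 4 < n) {a b : Fin n} (ha : a ∈ block n j) (hb : b ∈ block n j) (hab : a ≠ b) :
    AdjFrom G (j + 4) a ∨ AdjFrom G (j + 4) b := by
  obtain ⟨u, hu, hus, v, hv, -, huv⟩ := h3.exists_adj (A := {k | k.val < j + 4})
    (card_block_erase_erase_le ha hb hab) (a := a) (c := ⟨j + 4, hj⟩) (mem_block.1 ha).2
    (by simp) (by simp) (by simp [mem_block])
  have huB : u ∈ block n j := mem_block.2 ⟨by have := hvis u v huv; grind, hu⟩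
  have : u = a ∨ u = b := by grind
  rcases this with rfl | rfl
  · exact Or.inl ⟨v, not_lt.1 hv, huv⟩
  · exact Or.inr ⟨v, not_lt.1 hv, huv⟩

theorem Visible.adjBefore_or_adjBefore (hvis : Visible n 5 G) (h3 : ThreeConnected n G) {j : ℕ}
    (hj : 1 ≤ j) {a b : Fin n} (ha : a ∈ block n j) (hb : b ∈ block n j) (hab : a ≠ b) :
    AdjBefore G j a ∨ AdjBefore G j b := by
  have haj := (mem_block.1 ha).1
  obtain ⟨u, hu, -, v, hv, hvs, huv⟩ := h3.exists_adj (A := {k | k.val < j})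
    (card_block_erase_erase_le ha hb hab) (a := ⟨0, a.pos⟩) (c := a) hj
    (by simp [mem_block]; lia) (by simpa using haj) (by simp)
  have hvB : v ∈ block n j := mem_block.2 ⟨not_lt.1 hv, by have := hvis u v huv; grind⟩
  have : v = a ∨ v = b := by grind
  rcases this with rfl | rfl
  · exact Or.inl ⟨u, hu, huv.symm⟩
  · exact Or.inr ⟨u, hu, huv.symm⟩

theorem Cubic.not_adjBefore (hcubic : Cubic n G) {j m : ℕ} {a b c : Fin n}
    (hb : b.val ∈ Ico j m) (hc : c.val ∈ Ico j m) (hbc : b ≠ c) (hab : G.Adj a b)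
    (hac : G.Adj a c) (ha : AdjFrom G m a) : ¬ AdjBefore G j a := by
  rintro ⟨u, hu, hau⟩
  obtain ⟨v, hv, hav⟩ := ha
  rw [mem_Ico] at hb hc
  have := hcubic.eq_or_eq_or_eq (d := u) hbc (c := v) (by grind) (by grind) hab hac hav hau
  grind

theorem eq_of_mem_block {j : ℕ} {a b c d k : Fin n} (ha : a ∈ block n j) (hb : b ∈ block n j)
    (hc : c ∈ block n j) (hd : d ∈ block n j) (hdistinct : [a, b, c, d].Nodup)
    (hk : k ∈ block n j) : k = a ∨ k = b ∨ k = c ∨ k = d := by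
  have hsub : [a, b, c, d].toFinset ⊆ block n j := by
    intro v
    simp only [List.mem_toFinset, List.mem_cons, List.not_mem_nil, or_false]
    rintro (rfl | rfl | rfl | rfl) <;> assumption
  have heq := Finset.eq_of_subset_of_card_le hsub
    ((card_block_le j).trans (List.toFinset_card_of_nodup hdistinct).ge)
  simpa using heq.symm.subset hk

theorem ThreeConnected.preconnected_induce_of_leaves (h3 : ThreeConnected n G)
    (hcubic : Cubic n G) {A B : Set (Fin n)} {a b c d r : Fin n} (hAB : Disjoint A B)
    (ha : a ∉ A ∪ B) (hb : b ∉ A) (hc : c ∉ A) (hab : a ≠ b) (hac : a ≠ c)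
    (hA : ∀ u ∈ A, ∀ v ∉ A, G.Adj u v → v = b ∨ v = c ∨ v = d)
    (hda : G.Adj d a) (hdr : G.Adj d r) (hr : r ∈ B) : (G.induce A).Preconnected := by
  refine h3.preconnected_induce (s := {b, c}) (q := d) (c := a) Finset.card_le_two
    (by grind) (by grind) (by grind) (by grind) fun u hu v hv hud hvd => ?_
  have := Set.disjoint_left.1 hAB
  have := hcubic.eq_or_eq_or_eq (b := r) (c := u) (d := v) (by grind) (by grind) (by grind)
    hda hdr hud.symm hvd.symm
  grind

/-- The centre `a` of the star and the sets `L`, `R` are the branch sets of a `K₃,₃` minor whose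
other side consists of the leaves. -/
theorem PlanarGraph.false_of_star (hG : PlanarGraph n G) {L R : Set (Fin n)} {a b c d : Fin n}
    (hL : (G.induce L).Preconnected) (hR : (G.induce R).Preconnected) (hLR : Disjoint L R)
    (ha : a ∉ L ∪ R) (hbc : b ≠ c) (hbd : b ≠ d) (hcd : c ≠ d)
    (hleaf : ∀ k ∈ ({b, c, d} : Set (Fin n)),
      k ∉ L ∪ R ∧ G.Adj a k ∧ (∃ u ∈ L, G.Adj k u) ∧ ∃ u ∈ R, G.Adj k u) : False := by
  have hX : ∀ k ∈ ({b, c, d} : Set (Fin n)), ∀ i,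
      k ∉ ![{a}, L, R] i ∧ ∃ v ∈ ![{a}, L, R] i, G.Adj k v := fun k hk => by
    obtain ⟨hk, hak, hkL, hkR⟩ := hleaf k hk
    rw [mem_union, not_or] at hk
    simpa [Fin.forall_fin_succ, hak.symm, hak.ne', hk] using ⟨hkL, hkR⟩
  have hQ : ∀ t, ![b, c, d] t ∈ ({b, c, d} : Set (Fin n)) := by simp [Fin.forall_fin_succ]
  rw [mem_union, not_or] at ha
  refine hG.false_of_K33_branchSets (X := ![{a}, L, R]) (Q := ![b, c, d]) ?_ ?_ ?_
    (fun i t => (hX _ (hQ t) i).1) (fun i t => (hX _ (hQ t) i).2)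
  · simp [Fin.forall_fin_succ, hL, hR, SimpleGraph.Preconnected.of_subsingleton]
  · simp [Pairwise, Fin.forall_fin_succ, hLR, hLR.symm, ha]
  · simp [Function.Injective, Fin.forall_fin_succ, hbc, hbd, hcd, hbc.symm, hbd.symm, hcd.symm]

theorem PlanarGraph.not_star (hplanar : PlanarGraph n G) (h3 : ThreeConnected n G)
    (hcubic : Cubic n G) (hvis : Visible n 5 G) {j : ℕ} (hj : 1 ≤ j) (hjn : j + 4 < n)
    {a b c d : Fin n} (ha : a ∈ block n j) (hb : b ∈ block n j) (hc : c ∈ block n j)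
    (hd : d ∈ block n j) (hbc : b ≠ c) (hbd : b ≠ d) (hcd : c ≠ d) (hab : G.Adj a b)
    (hac : G.Adj a c) : ¬ G.Adj a d := by
  intro had
  have hblock : ∀ k ∈ block n j, k = a ∨ k = b ∨ k = c ∨ k = d := fun k =>
    eq_of_mem_block ha hb hc hd (by simp [hab.ne, hac.ne, had.ne, hbc, hbd, hcd])
  have hnbr : ∀ k, G.Adj a k → k ∈ block n j := fun k hk => by
    rcases hcubic.eq_or_eq_or_eq hbc hbd hcd hab hac had hk with rfl | rfl | rfl <;> assumption
  set L : Set (Fin n) := {u | u.val < j}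
  set R : Set (Fin n) := {u | j + 4 ≤ u.val}
  have hmem : ∀ k, k ∉ block n j ↔ k ∈ L ∨ k ∈ R := by grind [mem_block]
  have hto_left : ∀ k ∈ block n j, a ≠ k → ∃ u ∈ L, G.Adj k u := fun k hk hak =>
    (hvis.adjBefore_or_adjBefore h3 hj ha hk hak).resolve_left fun ⟨u, hu, hau⟩ => by grind
  have hto_right : ∀ k ∈ block n j, a ≠ k → ∃ u ∈ R, G.Adj k u := fun k hk hak =>
    (hvis.adjFrom_or_adjFrom h3 hjn ha hk hak).resolve_left fun ⟨u, hu, hau⟩ => by grind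
  have hleave : ∀ u ∉ block n j, ∀ v ∈ block n j, G.Adj u v → v = b ∨ v = c ∨ v = d :=
    fun u hu v hv huv => (hblock v hv).resolve_left fun h => hu (hnbr u (h ▸ huv.symm))
  have hLR : Disjoint L R := by grind
  have hL : (G.induce L).Preconnected := by
    obtain ⟨r, hr, hdr⟩ := hto_right d hd had.ne
    refine h3.preconnected_induce_of_leaves hcubic hLR (by grind) (by grind) (by grind) hab.ne
      hac.ne (fun u hu v hv huv => hleave u (by grind) v ?_ huv) had.symm hdr hr
    have := hvis u v huv
    grind
  have hR : (G.induce R).Preconnected := by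
    obtain ⟨l, hl, hdl⟩ := hto_left d hd had.ne
    refine h3.preconnected_induce_of_leaves hcubic hLR.symm (by grind) (by grind) (by grind)
      hab.ne hac.ne (fun u hu v hv huv => hleave u (by grind) v ?_ huv) had.symm hdl hl
    have := hvis u v huv
    grind
  have hleaf : ∀ k ∈ block n j, G.Adj a k →
      k ∉ L ∪ R ∧ G.Adj a k ∧ (∃ u ∈ L, G.Adj k u) ∧ ∃ u ∈ R, G.Adj k u := fun k hk hak =>
    ⟨by grind, hak, hto_left k hk hak.ne, hto_right k hk hak.ne⟩
  refine hplanar.false_of_star (a := a) hL hR hLR (by grind) hbc hbd hcd ?_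
  rintro k (rfl | rfl | rfl)
  exacts [hleaf _ hb hab, hleaf _ hc hac, hleaf _ hd had]

theorem isTightBlock_block (hplanar : PlanarGraph n G) (h3 : ThreeConnected n G)
    (hcubic : Cubic n G) (hvis : Visible n 5 G) {j : ℕ} (hj : 1 ≤ j) (hjn : j + 4 < n) :
    IsTightBlock G (block n j) (AdjBefore G j) (AdjFrom G (j + 4)) where
  left_or := hvis.adjBefore_or_adjBefore h3 hj
  right_or := hvis.adjFrom_or_adjFrom h3 hjn
  not_left hb hc := hcubic.not_adjBefore (mem_block.1 hb) (mem_block.1 hc)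
  star := hplanar.not_star h3 hcubic hvis hj hjn

end Connectivity

/-! ### Placements on a line -/

section Interleave

variable {a b c d : ℝ}

theorem interleave_iff : Interleave a b c d ↔
    (((a < c ∧ c < b) ∨ (b < c ∧ c < a)) ∧ ((d < a ∧ d < b) ∨ (a < d ∧ b < d))) ∨
    (((a < d ∧ d < b) ∨ (b < d ∧ d < a)) ∧ ((c < a ∧ c < b) ∨ (a < c ∧ b < c))) := by
  have hneg : ∀ t, (t - a) * (t - b) < 0 ↔ (a < t ∧ t < b) ∨ (b < t ∧ t < a) := fun t => by
    rw [mul_neg_iff]; simp only [sub_pos, sub_neg]; tauto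
  have hpos : ∀ t, 0 < (t - a) * (t - b) ↔ (t < a ∧ t < b) ∨ (a < t ∧ b < t) := fun t => by
    rw [mul_pos_iff]; simp only [sub_pos, sub_neg]; tauto
  rw [Interleave, mul_neg_iff, hneg, hneg, hpos, hpos]
  tauto

theorem Interleave.swap (h : Interleave a b c d) : Interleave c d a b := by
  unfold Interleave at *
  linarith

theorem Interleave.swap_right (h : Interleave a b c d) : Interleave a b d c := by
  unfold Interleave at *
  linarith

theorem Interleave.swap_left (h : Interleave a b c d) : Interleave b a c d :=
  h.swap.swap_right.swap

theorem Interleave.not_interleave (h : Interleave a b c d) : ¬ Interleave a c b d := by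
  rw [interleave_iff] at *
  grind

theorem Interleave.nodup (h : Interleave a b c d) : [a, b, c, d].Nodup := by
  rw [interleave_iff] at h
  simp only [List.nodup_cons, List.mem_cons, List.not_mem_nil, List.nodup_nil]
  grind

/-- Four points in the cyclic order `a`, `b`, `c`, `d`; a new point fits between `a` and `b`. -/
theorem Interleave.exists_notMem (h : Interleave a c b d) {F : Set ℝ} (hF : F.Finite) :
    ∃ t ∉ F, Interleave a b t c ∧ Interleave a b t d ∧ Interleave a c t d ∧
      Interleave t c b d := by
  simp only [interleave_iff] at *
  have hab : a ≠ b := by grind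
  by_cases hout : (c < a ∧ c < b) ∨ (a < c ∧ b < c)
  · obtain ⟨t, ht, htF⟩ := (Ioo_infinite (min_lt_max.2 hab)).exists_notMem_finite hF
    rw [mem_Ioo] at ht
    exact ⟨t, htF, by grind⟩
  · obtain ⟨M, hM⟩ := (hF.union (toFinite {a, b, c, d})).bddAbove
    have hlt : ∀ s ∈ F ∪ {a, b, c, d}, s < M + 1 := fun s hs => (hM hs).trans_lt (lt_add_one M)
    exact ⟨M + 1, fun h => (hlt _ (Or.inl h)).false, by grind⟩

end Interleave

/-- The placement `p` puts the vertices of `S` at distinct points, and no two coeval edges of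
`G.induce S` have interleaving ends. -/
structure GoodPlacement {n : ℕ} (ω : ℕ) (G : SimpleGraph (Fin n)) (S : Set (Fin n))
    (p : Fin n → ℝ) : Prop where
  injOn : InjOn p S
  not_interleave : ∀ u ∈ S, ∀ v ∈ S, ∀ x ∈ S, ∀ y ∈ S, G.Adj u v → G.Adj x y →
    CoevalEdges n ω u v x y → ¬ Interleave (p u) (p v) (p x) (p y)

section Placement

variable {n ω : ℕ} {G : SimpleGraph (Fin n)} {S : Set (Fin n)} {p : Fin n → ℝ}
  {a b c d x : Fin n}

protected theorem GoodPlacement.insert (hx : x ∉ S)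
    (hp : GoodPlacement ω G S p) (hpx : p x ∉ p '' S)
    (hcross : ∀ k ∈ S, ∀ u ∈ S, ∀ v ∈ S, Coeval n ω x k → Coeval n ω x u → Coeval n ω x v →
      G.Adj x k → G.Adj u v → ¬ Interleave (p x) (p k) (p u) (p v)) :
    GoodPlacement ω G (insert x S) p := by
  have hnew : ∀ k ∈ insert x S, ∀ u ∈ insert x S, ∀ v ∈ insert x S, G.Adj x k → G.Adj u v →
      CoevalEdges n ω x k u v → ¬ Interleave (p x) (p k) (p u) (p v) := by
    rintro k hk u hu v hv hxk huv ⟨i, hi, hin, hxi, hki, hui, hvi⟩ hcr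
    have := hcr.nodup
    simp only [List.nodup_cons, List.mem_cons, List.not_mem_nil] at this
    have hS : ∀ w ∈ insert x S, p w ≠ p x → w ∈ S := fun w hw hpw =>
      (mem_insert_iff.1 hw).resolve_left fun h => hpw (h ▸ rfl)
    exact hcross k (hS k hk (by tauto)) u (hS u hu (by tauto)) v (hS v hv (by tauto))
      ⟨i, hi, hin, hxi, hki⟩ ⟨i, hi, hin, hxi, hui⟩ ⟨i, hi, hin, hxi, hvi⟩ hxk huv hcr
  refine ⟨(injOn_insert hx).2 ⟨hp.injOn, hpx⟩, fun u hu v hv y hy z hz huv hyz hco hcr => ?_⟩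
  obtain ⟨i, hi, hin, hui, hvi, hyi, hzi⟩ := hco
  rcases hu with rfl | hu
  · exact hnew v hv y hy z hz huv hyz ⟨i, hi, hin, hui, hvi, hyi, hzi⟩ hcr
  rcases hv with rfl | hv
  · exact hnew u (.inr hu) y hy z hz huv.symm hyz ⟨i, hi, hin, hvi, hui, hyi, hzi⟩ hcr.swap_left
  rcases hy with rfl | hy
  · exact hnew z hz u (.inr hu) v (.inr hv) hyz huv ⟨i, hi, hin, hyi, hzi, hui, hvi⟩ hcr.swap
  rcases hz with rfl | hz
  · exact hnew y (.inr hy) u (.inr hu) v (.inr hv) hyz.symm huv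
      ⟨i, hi, hin, hzi, hyi, hui, hvi⟩ hcr.swap.swap_left
  · exact hp.not_interleave u hu v hv y hy z hz huv hyz ⟨i, hi, hin, hui, hvi, hyi, hzi⟩ hcr

theorem GoodPlacement.congr {q : Fin n → ℝ} (hp : GoodPlacement ω G S p) (hpq : EqOn p q S) :
    GoodPlacement ω G S q where
  injOn := hp.injOn.congr hpq
  not_interleave u hu v hv y hy z hz := by
    rw [← hpq hu, ← hpq hv, ← hpq hy, ← hpq hz]
    exact hp.not_interleave u hu v hv y hy z hz

theorem GoodPlacement.exists_update (hp : GoodPlacement ω G S p) (hx : x ∉ S) (ha : a ∈ S)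
    (hb : b ∈ S) (hc : c ∈ S) (hd : d ∈ S)
    (hnear : ∀ k ∈ S, Coeval n ω x k → k = a ∨ k = b ∨ k = c ∨ k = d)
    (hcyc : Interleave (p a) (p c) (p b) (p d))
    (hxc : G.Adj x c → ¬ G.Adj a b ∧ ¬ G.Adj b d) (hxd : G.Adj x d → ¬ G.Adj a b ∧ ¬ G.Adj a c) :
    ∃ t, GoodPlacement ω G (insert x S) (Function.update p x t) ∧
      Interleave t (p c) (p b) (p d) ∧ Interleave (p a) (p b) t (p d) := by
  obtain ⟨t, ht, habc, habd, hacd, htbcd⟩ := hcyc.exists_notMem ((toFinite S).image p)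
  have hpq : EqOn p (Function.update p x t) S := fun k hk => by
    rw [Function.update_of_ne (ne_of_mem_of_not_mem hk hx)]
  refine ⟨t, (hp.congr hpq).insert hx ?_ ?_, htbcd, habd⟩
  · simpa [← hpq.image_eq] using ht
  intro k hk u hu v hv hxk hxu hxv hadj huv hcr
  rw [Function.update_self, ← hpq hk, ← hpq hu, ← hpq hv] at hcr
  have hne := hcr.nodup
  have hab' := G.adj_comm a b
  have hac' := G.adj_comm a c
  have hbd' := G.adj_comm b d
  simp only [List.nodup_cons, List.mem_cons, List.not_mem_nil] at hne
  -- The chords `xa` and `xb` cross nothing, `xc` can only cross `ab` and `bd`, and `xd` can only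
  -- cross `ab` and `ac`.
  rcases hnear k hk hxk with rfl | rfl | rfl | rfl <;>
  rcases hnear u hu hxu with rfl | rfl | rfl | rfl <;>
  rcases hnear v hv hxv with rfl | rfl | rfl | rfl <;>
  grind [Interleave.swap, Interleave.swap_left, Interleave.swap_right, Interleave.not_interleave]

end Placement

/-! ### Arrangements of the current block -/

/-- A good placement of the vertices up to `block n i` puts the vertices of that block in the cyclic
order `y`, `z`, `u`, `v`. -/
structure Arrangeable {n : ℕ} (G : SimpleGraph (Fin n)) (i : ℕ) (y z u v : Fin n) : Prop where
  mem₁ : y ∈ block n i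
  mem₂ : z ∈ block n i
  mem₃ : u ∈ block n i
  mem₄ : v ∈ block n i
  exists_placement : ∃ p, GoodPlacement 5 G {k | k.val < i + 4} p ∧
    Interleave (p y) (p u) (p z) (p v)

/-- The next vertices fit between `y` and `z` in the cyclic order `y`, `z`, `u`, `v`, where `R`
tells which vertices have a neighbour among them: an edge to `v` would cross `yz` and `yu`, and an
edge to `u` would cross `yz` and `zv`. -/
def FreeGap {V : Type*} (G : SimpleGraph V) (R : V → Prop) (y z u v : V) : Prop :=
  ¬ G.Adj y z ∧ (R v → ¬ G.Adj y u) ∧ (R u → ¬ G.Adj z v)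

/-- The block starting at `i` can be arranged with a gap left for the vertices following it. -/
def Extendable {n : ℕ} (G : SimpleGraph (Fin n)) (i : ℕ) : Prop :=
  ∃ y z u v, Arrangeable G i y z u v ∧ FreeGap G (AdjFrom G (i + 4)) y z u v

theorem FreeGap.reverse {V : Type*} {G : SimpleGraph V} {R : V → Prop} {y z u v : V}
    (h : FreeGap G R y z u v) : FreeGap G R z y v u :=
  ⟨mt SimpleGraph.Adj.symm h.1, h.2.2, h.2.1⟩

section Arrangeable

variable {n i : ℕ} {G : SimpleGraph (Fin n)} {x y z u v : Fin n}

namespace Arrangeable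

theorem rotate (h : Arrangeable G i y z u v) : Arrangeable G i z u v y :=
  let ⟨p, hp, hcyc⟩ := h.exists_placement
  ⟨h.mem₂, h.mem₃, h.mem₄, h.mem₁, p, hp, hcyc.swap.swap_right⟩

theorem reverse (h : Arrangeable G i y z u v) : Arrangeable G i z y v u :=
  let ⟨p, hp, hcyc⟩ := h.exists_placement
  ⟨h.mem₂, h.mem₁, h.mem₄, h.mem₃, p, hp, hcyc.swap⟩

theorem nodup (h : Arrangeable G i y z u v) : [y, z, u, v].Nodup := by
  obtain ⟨p, -, hcyc⟩ := h.exists_placement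
  have : [y, u, z, v].Nodup := List.Nodup.of_map p hcyc.nodup
  grind

theorem eq_or_eq (h : Arrangeable G i y z u v) {k : Fin n} (hk : k ∈ block n i) :
    k = y ∨ k = z ∨ k = u ∨ k = v :=
  eq_of_mem_block h.mem₁ h.mem₂ h.mem₃ h.mem₄ h.nodup hk

theorem exists_insert (h : Arrangeable G i y z u v) (hx : x.val = i + 4)
    (hxu : G.Adj x u → ¬ G.Adj y z ∧ ¬ G.Adj z v) (hxv : G.Adj x v → ¬ G.Adj y z ∧ ¬ G.Adj y u) :
    ∃ p, GoodPlacement 5 G {k | k.val < i + 5} p ∧ Interleave (p x) (p u) (p z) (p v) ∧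
      Interleave (p y) (p z) (p x) (p v) := by
  have hne : ∀ {k}, k ∈ block n i → k ≠ x := fun hk => by grind [mem_block]
  obtain ⟨p, hp, hcyc⟩ := h.exists_placement
  have hS : insert x {k : Fin n | k.val < i + 4} = {k | k.val < i + 5} := by
    ext k
    simp [Fin.ext_iff, hx]
    lia
  obtain ⟨t, ht, htu, hyz⟩ := hp.exists_update (x := x) (by simp [hx]) (mem_block.1 h.mem₁).2
    (mem_block.1 h.mem₂).2 (mem_block.1 h.mem₃).2 (mem_block.1 h.mem₄).2
    (fun k hk ⟨j, hj⟩ => h.eq_or_eq (mem_block.2 ⟨by grind [window], hk⟩)) hcyc hxu hxv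
  refine ⟨_, hS ▸ ht, ?_⟩
  simpa only [Function.update_self, Function.update_of_ne (hne h.mem₁),
    Function.update_of_ne (hne h.mem₂), Function.update_of_ne (hne h.mem₃),
    Function.update_of_ne (hne h.mem₄)] using ⟨htu, hyz⟩

theorem mem_block_succ {k : Fin n} (hk : k ∈ block n i) (hki : k.val ≠ i) :
    k ∈ block n (i + 1) := by
  rw [mem_block] at *
  lia

theorem insert_drop_first (h : Arrangeable G i y z u v) (hx : x.val = i + 4) (hy : y.val = i)
    (hxu : G.Adj x u → ¬ G.Adj y z ∧ ¬ G.Adj z v) (hxv : G.Adj x v → ¬ G.Adj y z ∧ ¬ G.Adj y u) :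
    Arrangeable G (i + 1) x z u v := by
  obtain ⟨p, hp, hcyc, -⟩ := h.exists_insert hx hxu hxv
  have hne := h.nodup
  have hsucc : ∀ {k}, k ∈ block n i → k ≠ y → k ∈ block n (i + 1) := fun hk hky =>
    mem_block_succ hk fun hki => hky (Fin.ext (hki.trans hy.symm))
  exact ⟨mem_block.2 (by lia), hsucc h.mem₂ (by grind), hsucc h.mem₃ (by grind),
    hsucc h.mem₄ (by grind), p, hp, hcyc⟩

theorem insert_drop_third (h : Arrangeable G i y z u v) (hx : x.val = i + 4) (hu : u.val = i)
    (hxu : G.Adj x u → ¬ G.Adj y z ∧ ¬ G.Adj z v) (hxv : G.Adj x v → ¬ G.Adj y z ∧ ¬ G.Adj y u) :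
    Arrangeable G (i + 1) y x z v := by
  obtain ⟨p, hp, -, hcyc⟩ := h.exists_insert hx hxu hxv
  have hne := h.nodup
  have hsucc : ∀ {k}, k ∈ block n i → k ≠ u → k ∈ block n (i + 1) := fun hk hku =>
    mem_block_succ hk fun hki => hku (Fin.ext (hki.trans hu.symm))
  exact ⟨hsucc h.mem₁ (by grind), mem_block.2 (by lia), hsucc h.mem₂ (by grind),
    hsucc h.mem₄ (by grind), p, hp, hcyc⟩

theorem extendable (h : Arrangeable G i y z u v)
    (hgap : FreeGap G (AdjFrom G (i + 4)) y z u v ∨ FreeGap G (AdjFrom G (i + 4)) z u v y ∨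
      FreeGap G (AdjFrom G (i + 4)) u v y z ∨ FreeGap G (AdjFrom G (i + 4)) v y z u) :
    Extendable G i := by
  rcases hgap with hgap | hgap | hgap | hgap
  exacts [⟨_, _, _, _, h, hgap⟩, ⟨_, _, _, _, h.rotate, hgap⟩, ⟨_, _, _, _, h.rotate.rotate, hgap⟩,
    ⟨_, _, _, _, h.rotate.rotate.rotate, hgap⟩]

end Arrangeable

theorem adjFrom_iff {j : ℕ} (hx : x.val = j) {w : Fin n} :
    AdjFrom G j w ↔ G.Adj x w ∨ AdjFrom G (j + 1) w := by
  constructor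
  · rintro ⟨k, hk, hwk⟩
    rcases hk.eq_or_lt with hk | hk
    · exact Or.inl (Fin.ext (hx.trans hk) ▸ hwk.symm)
    · exact Or.inr ⟨k, hk, hwk⟩
  · rintro (hxw | ⟨k, hk, hwk⟩)
    · exact ⟨x, hx.ge, hxw.symm⟩
    · exact ⟨k, by lia, hwk⟩

end Arrangeable

/-! ### Advancing by one vertex -/

section Step

theorem IsTightBlock.exists_freeGap_of_not_adj {V : Type*} {G : SimpleGraph V} {B : Finset V}
    {L R : V → Prop} {x z u v : V} (h : IsTightBlock G B L R) (hx : x ∈ B) (hz : z ∈ B)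
    (hu : u ∈ B) (hv : v ∈ B) (hxu_ne : x ≠ u) (hzv_ne : z ≠ v) (hxu : ¬ G.Adj x u)
    (hzv : ¬ G.Adj z v) :
    FreeGap G R x z u v ∨ FreeGap G R z u v x ∨ FreeGap G R u v x z ∨ FreeGap G R v x z u := by
  have hcycle := h.four_cycle hx hz hu hv hxu_ne hzv_ne
  simp only [FreeGap, G.adj_comm u x, G.adj_comm v z, hxu, hzv]
  tauto

theorem IsTightBlock.exists_freeGap_of_not_right {V : Type*} {G : SimpleGraph V} {B : Finset V}
    {L R : V → Prop} {x z u v : V} (h : IsTightBlock G B L R) (hx : x ∈ B) (hz : z ∈ B)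
    (hu : u ∈ B) (hv : v ∈ B) (hxz : x ≠ z) (huz : u ≠ z) (hxu : G.Adj x u) (hzv : ¬ G.Adj z v)
    (hRz : ¬ R z) : FreeGap G R u v x z ∨ FreeGap G R v x z u := by
  have hRx := (h.right_or hx hz hxz).resolve_right hRz
  have hRu := (h.right_or hu hz huz).resolve_right hRz
  have htriangle := h.triangle hx hu hv hxu
  simp only [FreeGap, G.adj_comm v z, G.adj_comm v x, hzv, hRz]
  tauto

variable {n i : ℕ} {G : SimpleGraph (Fin n)} {x y z u v : Fin n}

theorem Arrangeable.adj_of_not_extendable {L : Fin n → Prop}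
    (hT : IsTightBlock G (block n i) L (AdjFrom G (i + 4))) (h : Arrangeable G i x z u v)
    (hzv : ¬ G.Adj z v) (hext : ¬ Extendable G i) :
    G.Adj x u ∧ AdjFrom G (i + 4) z ∧ AdjFrom G (i + 4) v := by
  have hne := h.nodup
  have hgap := mt h.extendable hext
  have hxu : G.Adj x u := by
    by_contra hxu
    exact hgap (hT.exists_freeGap_of_not_adj h.mem₁ h.mem₂ h.mem₃ h.mem₄ (by grind) (by grind)
      hxu hzv)
  refine ⟨hxu, by_contra fun hz => hgap ?_, by_contra fun hv => hgap ?_⟩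
  · have := hT.exists_freeGap_of_not_right h.mem₁ h.mem₂ h.mem₃ h.mem₄ (by grind) (by grind)
      hxu hzv hz
    tauto
  · have := hT.exists_freeGap_of_not_right h.mem₁ h.mem₄ h.mem₃ h.mem₂ (by grind) (by grind)
      hxu (mt SimpleGraph.Adj.symm hzv) hv
    exact this.elim (fun hg => Or.inr (Or.inl hg.reverse)) (fun hg => Or.inl hg.reverse)

theorem Arrangeable.extendable_of_insert_between_second_third (h : Arrangeable G i y z u v)
    (hx : x.val = i + 4) (hy : y.val = i) (hzu : ¬ G.Adj z u) (hzv : ¬ G.Adj z v)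
    (hyu : ¬ G.Adj y u) (hxv : G.Adj x v → ¬ AdjFrom G (i + 5) u) : Extendable G (i + 1) := by
  rw [G.adj_comm] at hzu hyu
  have hins : Arrangeable G (i + 1) u x z v := h.reverse.rotate.rotate.rotate.insert_drop_third
    hx hy (fun _ => ⟨hzu, hzv⟩) fun _ => ⟨hzu, hyu⟩
  exact hins.extendable (Or.inr (Or.inr (Or.inl
    ⟨hzv, fun _ => mt SimpleGraph.Adj.symm hzu, fun hu hvx => hxv hvx.symm hu⟩)))

theorem Extendable.succ_of_first {L : Fin n → Prop}
    (hT : IsTightBlock G (block n (i + 1)) L (AdjFrom G (i + 5)))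
    (h : Arrangeable G i y z u v) (hgap : FreeGap G (AdjFrom G (i + 4)) y z u v)
    (hx : x.val = i + 4) (hy : y.val = i) : Extendable G (i + 1) := by
  obtain ⟨hyz, hv, hu⟩ := hgap
  rw [adjFrom_iff hx] at hv hu
  have hins : Arrangeable G (i + 1) x z u v := h.insert_drop_first hx hy (by tauto) (by tauto)
  have hne := hins.nodup
  by_contra hext
  have hzv : ¬ G.Adj z v := fun hzv => hu
    (Or.inr (hins.rotate.adj_of_not_extendable hT (fun h => hu (Or.inl h.symm) hzv) hext).2.1) hzv
  obtain ⟨hxu, hRz, hRv⟩ := hins.adj_of_not_extendable hT hzv hext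
  have hyu : ¬ G.Adj y u := hv (Or.inr hRv)
  have hzu_or : ¬ G.Adj z u → G.Adj x v ∧ AdjFrom G (i + 5) u := fun hzu => by
    by_contra hcon
    exact hext (h.extendable_of_insert_between_second_third hx hy hzu hzv hyu (by tauto))
  have huv_or : ¬ G.Adj u v → G.Adj x z ∧ AdjFrom G (i + 5) u := fun huv => by
    by_contra hcon
    rw [G.adj_comm] at huv hzv
    exact hext
      (h.reverse.rotate.extendable_of_insert_between_second_third hx hy huv hzv hyu (by tauto))
  have hzu : ¬ G.Adj z u := fun hzu => by
    obtain ⟨hxz, hRu⟩ := huv_or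
      (hT.star hins.mem₃ hins.mem₁ hins.mem₂ hins.mem₄ (by grind)
        (by grind) (by grind) hxu.symm hzu.symm)
    exact hT.triangle hins.mem₂ hins.mem₃ hins.mem₁ hzu hxz.symm hxu.symm hRz hRu
  obtain ⟨hxv, hRu⟩ := hzu_or hzu
  have huv : ¬ G.Adj u v := fun huv =>
    hT.triangle hins.mem₃ hins.mem₄ hins.mem₁ huv hxu.symm hxv.symm hRu hRv
  exact hT.star hins.mem₁ hins.mem₂ hins.mem₃ hins.mem₄ (by grind) (by grind) (by grind)
    (huv_or huv).1 hxu hxv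

theorem Arrangeable.extendable_of_insert_beside_third (h : Arrangeable G i y z u v)
    (hx : x.val = i + 4) (hu : u.val = i) (hyz : ¬ G.Adj y z) (hyu : ¬ G.Adj y u)
    (hzv : ¬ G.Adj z v) (hyx : AdjFrom G (i + 5) v → ¬ G.Adj y x)
    (hins : G.Adj z u → G.Adj u v → ¬ G.Adj x y ∧ ¬ G.Adj x z) : Extendable G (i + 1) := by
  by_cases hzu : G.Adj z u
  · have hxyz : G.Adj x y ∨ G.Adj x z → ¬ G.Adj u v := by tauto
    have hins : Arrangeable G (i + 1) x v y z := h.rotate.rotate.insert_drop_first hx hu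
      (fun hxy => ⟨hxyz (Or.inl hxy), mt SimpleGraph.Adj.symm hzv⟩)
      fun hxz => ⟨hxyz (Or.inr hxz), mt SimpleGraph.Adj.symm hyu⟩
    exact hins.extendable (Or.inr (Or.inr (Or.inl ⟨hyz, hyx, fun _ => hzv⟩)))
  · rw [G.adj_comm] at hyz hyu hzu
    have hins : Arrangeable G (i + 1) x z y v := h.reverse.rotate.rotate.rotate.insert_drop_first
      hx hu (fun _ => ⟨hzu, hzv⟩) fun _ => ⟨hzu, hyu⟩
    exact hins.extendable (Or.inr (Or.inl ⟨hyz, fun _ => hzv, hyx⟩))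

theorem Arrangeable.extendable_of_insert_between_fourth_first (h : Arrangeable G i y z u v)
    (hx : x.val = i + 4) (hu : u.val = i) (hyz : ¬ G.Adj y z) (hyu : ¬ G.Adj y u)
    (hvy : ¬ G.Adj v y) (hxu : G.Adj x u → ¬ G.Adj z v)
    (hzx : AdjFrom G (i + 5) v → ¬ G.Adj z x) : Extendable G (i + 1) := by
  rw [G.adj_comm] at hyz hvy
  have hins : Arrangeable G (i + 1) y x v z := h.reverse.rotate.insert_drop_third
    hx hu (fun h => ⟨hvy, mt SimpleGraph.Adj.symm (hxu h)⟩) fun _ => ⟨hvy, hyu⟩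
  exact hins.extendable (Or.inr (Or.inr (Or.inr ⟨hyz, hzx, fun _ => hvy⟩)))

theorem Arrangeable.not_adjBefore (h : Arrangeable G i y z u v) (hcubic : Cubic n G)
    (hx : x.val = i + 4) {a b c : Fin n} (hb : b ∈ [x, y, z, u, v]) (hc : c ∈ [x, y, z, u, v])
    (hbc : b ≠ c) (hab : G.Adj a b) (hac : G.Adj a c) (ha : AdjFrom G (i + 5) a) :
    ¬ AdjBefore G i a := by
  have hwindow : ∀ k ∈ [x, y, z, u, v], k.val ∈ Ico i (i + 5) := by
    have := mem_block.1 h.mem₁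
    have := mem_block.1 h.mem₂
    have := mem_block.1 h.mem₃
    have := mem_block.1 h.mem₄
    grind
  exact hcubic.not_adjBefore (hwindow b hb) (hwindow c hc) hbc hab hac ha

theorem Arrangeable.extendable_of_third_of_adj (hcubic : Cubic n G)
    (hleft : ∀ {a b}, a ∈ block n i → b ∈ block n i → a ≠ b → AdjBefore G i a ∨ AdjBefore G i b)
    {L : Fin n → Prop} (hT : IsTightBlock G (block n (i + 1)) L (AdjFrom G (i + 5)))
    (h : Arrangeable G i y z u v) (hx : x.val = i + 4) (hu : u.val = i)
    (hins : Arrangeable G (i + 1) y x z v) (hyz : ¬ G.Adj y z) (hyu : ¬ G.Adj y u)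
    (hxv : G.Adj x v) (hRy : AdjFrom G (i + 5) y) (hRz : AdjFrom G (i + 5) z)
    (hvy : G.Adj v y) : Extendable G (i + 1) := by
  by_contra hext
  have hne := h.nodup
  have hne' := hins.nodup
  have hxu : x ≠ u := by grind
  have hzv : ¬ G.Adj z v := fun hzv => hT.star hins.mem₄ hins.mem₂ hins.mem₁ hins.mem₃ (by grind)
    (by grind) (by grind) hxv.symm hvy hzv.symm
  have hyx : AdjFrom G (i + 5) v → ¬ G.Adj y x := fun hRv hyx =>
    hT.triangle hins.mem₁ hins.mem₄ hins.mem₂ hvy.symm hyx hxv.symm hRy hRv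
  obtain ⟨hzu, huv, hxyz⟩ : G.Adj z u ∧ G.Adj u v ∧ (G.Adj x y ∨ G.Adj x z) := by
    by_contra hcon
    exact hext (h.extendable_of_insert_beside_third hx hu hyz hyu hzv hyx (by tauto))
  have hLv : ¬ AdjBefore G i v := by
    rintro ⟨k, hk, hvk⟩
    have := hcubic.eq_or_eq_or_eq (by grind) hxu (by grind) hxv.symm hvy huv.symm hvk
    have := mem_block.1 h.mem₁
    grind
  rcases hxyz with hxy | hxz
  · exact h.not_adjBefore hcubic hx (by simp) (by simp) (by grind) hxy.symm hvy.symm hRy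
      ((hleft h.mem₁ h.mem₄ hvy.ne').resolve_right hLv)
  · exact h.not_adjBefore hcubic hx (by simp) (by simp) hxu hxz.symm hzu hRz
      ((hleft h.mem₂ h.mem₄ (by grind)).resolve_right hLv)

theorem Arrangeable.extendable_of_third_of_not_adj (hcubic : Cubic n G)
    (hleft : ∀ {a b}, a ∈ block n i → b ∈ block n i → a ≠ b → AdjBefore G i a ∨ AdjBefore G i b)
    {L : Fin n → Prop} (hT : IsTightBlock G (block n (i + 1)) L (AdjFrom G (i + 5)))
    (h : Arrangeable G i y z u v) (hx : x.val = i + 4) (hu : u.val = i)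
    (hins : Arrangeable G (i + 1) y x z v) (hyz : ¬ G.Adj y z) (hyu : ¬ G.Adj y u)
    (hzv : G.Adj x u → ¬ G.Adj z v) (hxv : G.Adj x v) (hRz : AdjFrom G (i + 5) z)
    (hvy : ¬ G.Adj v y) : Extendable G (i + 1) := by
  by_contra hext
  have hne := h.nodup
  have hne' := hins.nodup
  have hxu : x ≠ u := by grind
  obtain ⟨hRv, hzx⟩ : AdjFrom G (i + 5) v ∧ G.Adj z x := by
    by_contra hcon
    exact hext (h.extendable_of_insert_between_fourth_first hx hu hyz hyu hvy hzv (by tauto))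
  have hzv : ¬ G.Adj z v := fun hzv =>
    hT.triangle hins.mem₃ hins.mem₄ hins.mem₂ hzv hzx hxv.symm hRz hRv
  have hyx : ¬ G.Adj y x := fun hyx => hT.star hins.mem₂ hins.mem₁ hins.mem₃ hins.mem₄
    (by grind) (by grind) (by grind) hyx.symm hzx.symm hxv
  obtain ⟨hzu, huv⟩ : G.Adj z u ∧ G.Adj u v := by
    by_contra hcon
    exact hext (h.extendable_of_insert_beside_third hx hu hyz hyu hzv (fun _ => hyx) (by tauto))
  rcases hleft h.mem₂ h.mem₄ (by grind) with hLz | hLv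
  · exact h.not_adjBefore hcubic hx (by simp) (by simp) hxu hzx hzu hRz hLz
  · exact h.not_adjBefore hcubic hx (by simp) (by simp) hxu hxv.symm huv.symm hRv hLv

theorem Extendable.succ_of_third (hcubic : Cubic n G)
    (hleft : ∀ {a b}, a ∈ block n i → b ∈ block n i → a ≠ b → AdjBefore G i a ∨ AdjBefore G i b)
    {L : Fin n → Prop} (hT : IsTightBlock G (block n (i + 1)) L (AdjFrom G (i + 5)))
    (h : Arrangeable G i y z u v) (hgap : FreeGap G (AdjFrom G (i + 4)) y z u v)
    (hx : x.val = i + 4) (hu : u.val = i) : Extendable G (i + 1) := by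
  obtain ⟨hyz, hv, hzv⟩ := hgap
  rw [adjFrom_iff hx] at hv hzv
  have hins : Arrangeable G (i + 1) y x z v := h.insert_drop_third hx hu (by tauto) (by tauto)
  by_contra hext
  obtain ⟨hxv, hRz, hRy⟩ :=
    hins.rotate.adj_of_not_extendable hT (mt SimpleGraph.Adj.symm hyz) hext
  have hyu : ¬ G.Adj y u := hv (Or.inl hxv)
  by_cases hvy : G.Adj v y
  · exact hext (h.extendable_of_third_of_adj hcubic hleft hT hx hu hins hyz hyu hxv hRy hRz hvy)
  · exact hext (h.extendable_of_third_of_not_adj hcubic hleft hT hx hu hins hyz hyu (by tauto) hxv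
      hRz hvy)

theorem Extendable.succ (hplanar : PlanarGraph n G) (h3 : ThreeConnected n G)
    (hcubic : Cubic n G) (hvis : Visible n 5 G) (hi : 1 ≤ i) (hin : i + 5 < n)
    (h : Extendable G i) : Extendable G (i + 1) := by
  obtain ⟨y, z, u, v, h, hgap⟩ := h
  have hT := isTightBlock_block hplanar h3 hcubic hvis (j := i + 1) (by lia) (by lia)
  have hleft : ∀ {a b}, a ∈ block n i → b ∈ block n i → a ≠ b →
      AdjBefore G i a ∨ AdjBefore G i b := hvis.adjBefore_or_adjBefore h3 hi
  have hx : (⟨i + 4, by lia⟩ : Fin n).val = i + 4 := rfl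
  have hmem : (⟨i, by lia⟩ : Fin n) ∈ block n i := mem_block.2 ⟨le_rfl, by simp⟩
  rcases h.eq_or_eq hmem with hk | hk | hk | hk
  · exact succ_of_first hT h hgap hx (hk ▸ rfl)
  · exact succ_of_first hT h.reverse hgap.reverse hx (hk ▸ rfl)
  · exact succ_of_third hcubic hleft hT h hgap hx (hk ▸ rfl)
  · exact succ_of_third hcubic hleft hT h.reverse hgap.reverse hx (hk ▸ rfl)

end Step

/-! ### The first five vertices -/

section Base

variable {n ω : ℕ} {G : SimpleGraph (Fin n)} {p q s w y z u v : Fin n}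

theorem GoodPlacement.of_interleave {S : Set (Fin n)} {f : Fin n → ℝ}
    (hS : ∀ k ∈ S, k = y ∨ k = z ∨ k = u ∨ k = v) (hcyc : Interleave (f y) (f u) (f z) (f v))
    (hcross : G.Adj y u → ¬ G.Adj z v) : GoodPlacement ω G S f where
  injOn := by
    have := hcyc.nodup
    intro k hk l hl hkl
    grind
  not_interleave := by
    intro a ha b hb c hc d hd hab hcd _ hcr
    have hne := hcr.nodup
    have hyu := G.adj_comm y u
    have hzv := G.adj_comm z v
    rcases hS a ha with rfl | rfl | rfl | rfl <;> rcases hS b hb with rfl | rfl | rfl | rfl <;>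
    first
    | exact absurd hab G.irrefl
    | rcases hS c hc with rfl | rfl | rfl | rfl <;> rcases hS d hd with rfl | rfl | rfl | rfl <;>
      grind [Interleave.swap, Interleave.swap_left, Interleave.swap_right,
        Interleave.not_interleave]

theorem extendable_one_of_path (hn : 0 < n) (hy : y ∈ block n 1) (hz : z ∈ block n 1)
    (hu : u ∈ block n 1) (hv : v ∈ block n 1) (hdistinct : [y, z, u, v].Nodup)
    (hyz : ¬ G.Adj y z) (hyu : ¬ G.Adj y u) (hzv : ¬ G.Adj z v) : Extendable G 1 := by
  let a : Fin n := ⟨0, hn⟩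
  have hne : ∀ {k}, k ∈ block n 1 → k ≠ a := fun hk => by grind [mem_block]
  have hS : insert a {k | k ∈ block n 1} = {k : Fin n | k.val < 1 + 4} := by
    ext k
    simp [Fin.ext_iff, a, mem_block]
    lia
  let f : Fin n → ℝ := fun k => if k = y then 0 else if k = z then 1 else if k = u then 2 else 3
  have hcyc : Interleave (f y) (f u) (f z) (f v) := by
    have : f y = 0 ∧ f z = 1 ∧ f u = 2 ∧ f v = 3 := by grind
    rw [this.1, this.2.1, this.2.2.1, this.2.2.2, Interleave]
    norm_num
  have hmem : ∀ k ∈ block n 1, k = y ∨ k = z ∨ k = u ∨ k = v := fun k =>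
    eq_of_mem_block hy hz hu hv hdistinct
  have hf : GoodPlacement 5 G {k | k ∈ block n 1} f :=
    .of_interleave hmem hcyc fun h => absurd h hyu
  obtain ⟨t, ht, -⟩ := hf.exists_update (x := a) (fun ha => hne ha rfl) hy hz hu hv
    (fun k hk _ => hmem k hk) hcyc (fun _ => ⟨hyz, hzv⟩) fun _ => ⟨hyz, hyu⟩
  refine ⟨y, z, u, v, ⟨hy, hz, hu, hv, _, hS ▸ ht, ?_⟩, hyz, fun _ => hyu, fun _ => hzv⟩
  simpa only [Function.update_of_ne (hne hy), Function.update_of_ne (hne hz),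
    Function.update_of_ne (hne hu), Function.update_of_ne (hne hv)] using hcyc

/-- `p` and `q` have at most one neighbour in the block, and no vertex of it has three there, so the
block induces a subgraph of a path. -/
theorem extendable_one_of_leaves {L R : Fin n → Prop} (hT : IsTightBlock G (block n 1) L R)
    (hp : p ∈ block n 1) (hq : q ∈ block n 1) (hs : s ∈ block n 1) (hw : w ∈ block n 1)
    (hdistinct : [p, q, s, w].Nodup) (hLp : L p) (hRp : R p) (hLq : L q) (hRq : R q) :
    Extendable G 1 := by
  have hn : 0 < n := p.pos
  have hleaf : ∀ {k b c}, L k → R k → b ∈ block n 1 → c ∈ block n 1 → b ≠ c → G.Adj k b →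
      ¬ G.Adj k c := fun hLk hRk hb hc hbc hkb hkc => hT.not_left hb hc hbc hkb hkc hRk hLk
  have hqp := G.adj_comm q p
  have hsp := G.adj_comm s p
  have hsq := G.adj_comm s q
  have hwp := G.adj_comm w p
  have hws := G.adj_comm w s
  by_cases hpq : G.Adj p q
  · exact extendable_one_of_path hn hs hp hq hw (by grind) (by grind) (by grind) (by grind)
  by_cases hsw : (G.Adj p s ∨ G.Adj q w) ∧ (G.Adj p w ∨ G.Adj q s)
  · have hsw' : (G.Adj p s ∧ G.Adj q s) ∨ (G.Adj p w ∧ G.Adj q w) := by grind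
    rcases hsw' with ⟨hps, hqs⟩ | ⟨hpw, hqw⟩
    · have := hT.star hs hp hq hw (by grind) (by grind) (by grind) hps.symm hqs.symm
      exact extendable_one_of_path hn hw hp hs hq (by grind) (by grind) (by grind) (by grind)
    · have := hT.star hw hp hq hs (by grind) (by grind) (by grind) hpw.symm hqw.symm
      exact extendable_one_of_path hn hs hp hw hq (by grind) (by grind) (by grind) (by grind)
  · rcases not_and_or.1 hsw with h | h
    · exact extendable_one_of_path hn hq hp hw hs (by grind) (by grind) (by grind) (by grind)
    · exact extendable_one_of_path hn hq hp hs hw (by grind) (by grind) (by grind) (by grind)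

theorem extendable_one {L R : Fin n → Prop} (hT : IsTightBlock G (block n 1) L R) (hn : 5 ≤ n) :
    Extendable G 1 := by
  classical
  have hL : ((block n 1).filter (¬ L ·)).card ≤ 1 := by
    simp only [Finset.card_le_one, Finset.mem_filter]
    rintro a ⟨ha, hLa⟩ b ⟨hb, hLb⟩
    exact by_contra fun hab => (hT.left_or ha hb hab).elim hLa hLb
  have hR : ((block n 1).filter (¬ R ·)).card ≤ 1 := by
    simp only [Finset.card_le_one, Finset.mem_filter]
    rintro a ⟨ha, hRa⟩ b ⟨hb, hRb⟩
    exact by_contra fun hab => (hT.right_or ha hb hab).elim hRa hRb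
  have hLR : 1 < ((block n 1).filter fun k => L k ∧ R k).card := by
    have hL' := Finset.card_filter_add_card_filter_not (s := block n 1) L
    have hLR := Finset.card_filter_add_card_filter_not (s := (block n 1).filter L) R
    have hsub : ((block n 1).filter L).filter (¬ R ·) ⊆ (block n 1).filter (¬ R ·) :=
      Finset.filter_subset_filter _ (Finset.filter_subset _ _)
    have := Finset.card_le_card hsub
    rw [card_block (by lia)] at hL'
    rw [Finset.filter_filter] at hLR
    lia
  obtain ⟨p, hp, q, hq, hpq⟩ := Finset.one_lt_card.1 hLR
  rw [Finset.mem_filter] at hp hq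
  have hrest : 1 < (block n 1 \ {p, q}).card := by
    have := Finset.le_card_sdiff {p, q} (block n 1)
    rw [Finset.card_pair hpq, card_block (by lia)] at this
    lia
  obtain ⟨s, hs, w, hw, hsw⟩ := Finset.one_lt_card.1 hrest
  rw [Finset.mem_sdiff] at hs hw
  exact extendable_one_of_leaves hT hp.1 hq.1 hs.1 hw.1 (by grind) hp.2.1 hp.2.2 hq.2.1 hq.2.2

end Base

section Final

variable {n : ℕ} {G : SimpleGraph (Fin n)}

theorem extendable (hplanar : PlanarGraph n G) (h3 : ThreeConnected n G)
    (hcubic : Cubic n G) (hvis : Visible n 5 G) {i : ℕ} (hi : 1 ≤ i) (hin : i + 4 < n) :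
    Extendable G i := by
  induction i, hi using Nat.le_induction with
  | base => exact extendable_one (isTightBlock_block hplanar h3 hcubic hvis le_rfl hin) (by lia)
  | succ i hi ih => exact .succ hplanar h3 hcubic hvis hi (by lia) (ih (by lia))

theorem Extendable.exists_goodPlacement {i : ℕ} (h : Extendable G i) (hin : i + 5 = n) :
    ∃ p, GoodPlacement 5 G Set.univ p := by
  obtain ⟨y, z, u, v, harr, hyz, hyu, hzv⟩ := h
  have hx : (⟨i + 4, by lia⟩ : Fin n).val = i + 4 := rfl
  obtain ⟨p, hp, -⟩ := harr.exists_insert hx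
    (fun hxu => ⟨hyz, hzv ((adjFrom_iff hx).2 (.inl hxu))⟩)
    fun hxv => ⟨hyz, hyu ((adjFrom_iff hx).2 (.inl hxv))⟩
  have huniv : {k : Fin n | k.val < i + 5} = Set.univ :=
    Set.eq_univ_of_forall fun k => hin ▸ k.2
  exact ⟨p, huniv ▸ hp⟩

end Final

/-- **Lemma 6 in the appendix.** Every `n`-vertex planar
triconnected cubic graph `G` with `n ≥ 6`, equipped with a vertex ordering with
viewing window `ω = 5` making all edges visible, admits a good embedding. -/
theorem exists_good_embedding
    (n : ℕ) (G : SimpleGraph (Fin n)) (hn : 6 ≤ n)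
    (hplanar : PlanarGraph n G) (h3 : ThreeConnected n G) (hcubic : Cubic n G)
    (hvis : Visible n 5 G) :
    ∃ D : RawDrawing n, GoodEmbedding n 5 G D := by
  obtain ⟨p, hp⟩ := (extendable hplanar h3 hcubic hvis (i := n - 5) (by lia)
    (by lia)).exists_goodPlacement (by lia)
  exact exists_goodEmbedding_of_not_interleave (Set.injOn_univ.1 hp.injOn)
    fun u v x y => hp.not_interleave u trivial v trivial x trivial y trivial

end GraphStories
end

section
/- Let G be an n-vertex planar triconnected cubic graph with n ≥ 6, equipped with a vertex ordering τ with viewing window ω = 5 such that every edge (v_i, v_j) satisfies |i − j| < 5. There exists an embedding φ' of G (crossings interpreted as dummy vertices) satisfying: (i) the external cycle of φ' is not a critical cycle; and (ii) any two crossing edges of φ' are not coeval, and one of them is an edge incident to v_1. -/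
open Set

namespace GraphStories

/-
If `n = 6`, then only `v₁` and `v₆` are not coeval. A straight-line drawing in which `v₁` and `v₆`
are extreme has both of them on every external cycle, and the points can be chosen so that only
edges at `v₁` cross edges at `v₆`.

Suppose `n ≥ 7`. Since `ω = 5`, a cycle coeval with a vertex off it has length at most four and lies
in a single window, so it suffices to find an edge that is on no triangle or 4-cycle inside a
window: inverting the plane at a point close to that edge brings it to the external cycle of a
planar drawing. All windows containing `v₁` are contained in `G_5`. If every edge at `v₁` is on a
short cycle inside `G_5`, then `G_5` consists of `v₁`, its three neighbours and one more vertex, and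
the short cycles leave room for at most three edges from `G_5` to the rest of `G`. By 3-connectivity
these edges form a matching, so a 4-cycle through one of them contains another and makes their ends
in `G_5` adjacent. If this happened for all three, two of the ends would separate the third from the
other vertices of `G_5`; hence one of the three edges is on no triangle or 4-cycle of `G` at all.
-/

open SimpleGraph

section ThreeConnected

variable {V : Type*} {G : SimpleGraph V}

theorem subset_or_compl_subset_of_preconnected_induce {R S : Set V}
    (hR : (G.induce Rᶜ).Preconnected)
    (hcut : ∀ u ∈ S, ∀ v ∉ S, G.Adj u v → u ∈ R ∨ v ∈ R) : S ⊆ R ∨ Sᶜ ⊆ R := by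
  by_contra! h
  obtain ⟨⟨u, huS, huR⟩, ⟨v, hvS, hvR⟩⟩ := h.imp not_subset.1 not_subset.1
  obtain ⟨p⟩ := hR ⟨u, huR⟩ ⟨v, hvR⟩
  obtain ⟨d, -, hd, hd'⟩ := p.exists_boundary_dart (Subtype.val ⁻¹' S) huS hvS
  exact (hcut _ hd _ hd' d.adj).elim d.fst.2 d.snd.2

/-- The edge `u w` lies on a cycle `u x w` or `u x y w` of `G` all of whose vertices belong to
`W`. Since `ω = 5`, the cycles that can be critical are of this kind, with `W` a window. -/
def OnShortCycle (G : SimpleGraph V) (W : Set V) (u w : V) : Prop :=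
  G.Adj u w ∧ u ∈ W ∧ w ∈ W ∧ ((∃ x ∈ W, G.Adj u x ∧ G.Adj x w) ∨
    ∃ x ∈ W, ∃ y ∈ W, x ≠ w ∧ y ≠ u ∧ G.Adj u x ∧ G.Adj x y ∧ G.Adj y w)

theorem OnShortCycle.mono {W W' : Set V} {u w : V} (h : OnShortCycle G W u w) (hW : W ⊆ W') :
    OnShortCycle G W' u w := by
  obtain ⟨huw, hu, hw, ⟨x, hx, h⟩ | ⟨x, hx, y, hy, h⟩⟩ := h
  · exact ⟨huw, hW hu, hW hw, .inl ⟨x, hW hx, h⟩⟩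
  · exact ⟨huw, hW hu, hW hw, .inr ⟨x, hW hx, y, hW hy, h⟩⟩

theorem OnShortCycle.of_mem_edges {r u w : V} {c : G.Walk r r} (hc : c.IsCycle)
    (hlen : c.length ≤ 4) {W : Set V} (hW : ∀ v ∈ c.support, v ∈ W) (he : s(u, w) ∈ c.edges) :
    OnShortCycle G W u w := by
  have hlen' := hc.three_le_length
  have hnodup := hc.support_nodup
  refine ⟨c.adj_of_mem_edges he, hW _ (c.fst_mem_support_of_mem_edges he),
    hW _ (c.snd_mem_support_of_mem_edges he), ?_⟩
  obtain _ | ⟨h₁, _ | ⟨h₂, _ | ⟨h₃, _ | ⟨h₄, _ | ⟨h₅, c⟩⟩⟩⟩⟩ := c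
  case cons.cons.cons.nil =>
    left
    simp only [Walk.support_cons, Walk.support_nil, Walk.edges_cons, Walk.edges_nil, List.mem_cons,
      List.not_mem_nil, or_false, forall_eq_or_imp, forall_eq, Sym2.eq_iff] at hW he
    obtain (⟨rfl, rfl⟩ | ⟨rfl, rfl⟩) | (⟨rfl, rfl⟩ | ⟨rfl, rfl⟩) | (⟨rfl, rfl⟩ | ⟨rfl, rfl⟩) := he
      <;> grind [G.adj_comm]
  case cons.cons.cons.cons.nil =>
    right
    simp only [Walk.support_cons, Walk.support_nil, Walk.edges_cons, Walk.edges_nil, List.mem_cons,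
      List.not_mem_nil, or_false, forall_eq_or_imp, forall_eq, Sym2.eq_iff, List.tail_cons,
      List.nodup_cons, not_or] at hW he hnodup
    obtain (⟨rfl, rfl⟩ | ⟨rfl, rfl⟩) | (⟨rfl, rfl⟩ | ⟨rfl, rfl⟩) | (⟨rfl, rfl⟩ | ⟨rfl, rfl⟩) |
      (⟨rfl, rfl⟩ | ⟨rfl, rfl⟩) := he <;> grind [G.adj_comm]
  all_goals simp only [Walk.length_cons, Walk.length_nil] at hlen hlen'; omega

/-- In a 4-cycle through an edge of a matching cut, the opposite edge is the other cut edge. -/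
theorem OnShortCycle.exists_adj_of_matching_cut {ι : Type*} {S : Set V} {f g : ι → V}
    (hf : f.Injective) (hg : g.Injective) (hfS : ∀ i, f i ∈ S) (hgS : ∀ i, g i ∉ S)
    (hcut : ∀ u ∈ S, ∀ v ∉ S, G.Adj u v → ∃ i, u = f i ∧ v = g i) {i : ι}
    (hi : OnShortCycle G univ (f i) (g i)) : ∃ j ≠ i, G.Adj (f i) (f j) := by
  obtain ⟨-, -, -, ⟨x, -, hix, hxi⟩ | ⟨x, -, y, -, hxi, hyi, hix, hxy, hyi'⟩⟩ := hi
  · exfalso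
    by_cases hx : x ∈ S
    · obtain ⟨j, rfl, hj⟩ := hcut x hx _ (hgS i) hxi
      exact hix.ne (congrArg f (hg hj))
    · obtain ⟨j, hj, rfl⟩ := hcut _ (hfS i) x hx hix
      exact hxi.ne (congrArg g (hf hj).symm)
  · have hx : x ∈ S := by
      by_contra hx
      obtain ⟨j, hj, rfl⟩ := hcut _ (hfS i) x hx hix
      exact hxi (congrArg g (hf hj).symm)
    have hy : y ∉ S := by
      intro hy
      obtain ⟨j, rfl, hj⟩ := hcut y hy _ (hgS i) hyi'
      exact hyi (congrArg f (hg hj).symm)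
    obtain ⟨j, rfl, -⟩ := hcut x hx y hy hxy
    exact ⟨j, fun h => hix.ne (congrArg f h.symm), hix⟩

end ThreeConnected

section Cubic

variable {n : ℕ} {G : SimpleGraph (Fin n)}

theorem ThreeConnected.subset_pair_or_compl_subset_pair (h3 : ThreeConnected n G)
    {S : Set (Fin n)} (a b : Fin n)
    (hcut : ∀ u ∈ S, ∀ v ∉ S, G.Adj u v → u = a ∨ u = b ∨ v = a ∨ v = b) :
    S ⊆ {a, b} ∨ Sᶜ ⊆ {a, b} := by
  rw [← Finset.coe_pair]
  refine subset_or_compl_subset_of_preconnected_induce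
    (h3.2 {a, b} Finset.card_le_two).preconnected fun u hu v hv huv => ?_
  simpa [or_assoc] using hcut u hu v hv huv

theorem Cubic.exists_neighborSet_eq (hc : Cubic n G) (v : Fin n) :
    ∃ x y z, x ≠ y ∧ x ≠ z ∧ y ≠ z ∧ G.neighborSet v = {x, y, z} :=
  Set.ncard_eq_three.1 (hc v)

theorem Cubic.neighborSet_eq (hc : Cubic n G) {v x y z : Fin n} (hxy : x ≠ y) (hxz : x ≠ z)
    (hyz : y ≠ z) (hx : G.Adj v x) (hy : G.Adj v y) (hz : G.Adj v z) :
    G.neighborSet v = {x, y, z} := by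
  refine (Set.eq_of_subset_of_ncard_le ?_ ?_).symm
  · rintro _ (rfl | rfl | rfl) <;> assumption
  · rw [hc v, Set.ncard_eq_three.2 ⟨x, y, z, hxy, hxz, hyz, rfl⟩]

theorem Cubic.exists_third_neighbor (hc : Cubic n G) {v x y : Fin n} (hxy : x ≠ y)
    (hx : G.Adj v x) (hy : G.Adj v y) : ∃ z, x ≠ z ∧ y ≠ z ∧ G.neighborSet v = {x, y, z} := by
  have : ¬ G.neighborSet v ⊆ {x, y} := fun h => by
    have := Set.ncard_le_ncard h
    rw [hc v, Set.ncard_pair hxy] at this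
    omega
  obtain ⟨z, hz, hzxy⟩ := not_subset.1 this
  rw [mem_insert_iff, mem_singleton_iff, not_or, eq_comm, eq_comm (a := z)] at hzxy
  exact ⟨z, hzxy.1, hzxy.2, hc.neighborSet_eq hxy hzxy.1 hzxy.2 hx hy hz⟩

theorem ThreeConnected.eq_of_common_neighbors (h3 : ThreeConnected n G) (hc : Cubic n G)
    (hn : 5 ≤ n) {p q r s : Fin n} (hpq : G.Adj p q) (hpr : G.Adj p r) (hqr : G.Adj q r)
    (hps : G.Adj p s) (hqs : G.Adj q s) : r = s := by
  by_contra hrs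
  have hp := hc.neighborSet_eq hqr.ne hqs.ne hrs hpq hpr hps
  have hq := hc.neighborSet_eq hpr.ne hps.ne hrs hpq.symm hqr hqs
  have hcut : ∀ u ∈ ({p, q} : Set (Fin n)), ∀ v ∉ ({p, q} : Set (Fin n)), G.Adj u v →
      u = r ∨ u = s ∨ v = r ∨ v = s := by
    rintro u hu v hv huv
    rw [← mem_neighborSet] at huv
    obtain rfl | rfl := hu <;> simp_all
  obtain ⟨o, -, ho⟩ := Finset.exists_mem_notMem_of_card_lt_card (s := {p, q, r, s})
    (t := Finset.univ) (Finset.card_le_four.trans_lt (by rw [Finset.card_fin]; exact hn))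
  simp only [Finset.mem_insert, Finset.mem_singleton, not_or] at ho
  obtain h | h := h3.subset_pair_or_compl_subset_pair r s hcut
  · exact (h (mem_insert p {q})).elim hpr.ne hps.ne
  · exact (h (show o ∉ {p, q} by simp [ho])).elim ho.2.2.1 ho.2.2.2

theorem ThreeConnected.exists_cut_edge_avoiding {ι : Type*} (h3 : ThreeConnected n G)
    {S : Set (Fin n)} {f g : ι → Fin n} {t : Fin n} (htS : t ∈ S) (hS : Sᶜ.Nontrivial)
    (hcut : ∀ u ∈ S, ∀ v ∉ S, G.Adj u v → ∃ i, u = f i ∧ v = g i)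
    {a b : Fin n} (ha : a ∈ S) (hta : t ≠ a) (htb : t ≠ b) :
    ∃ i, G.Adj (f i) (g i) ∧ g i ∉ S ∧ f i ≠ a ∧ f i ≠ b ∧ g i ≠ b := by
  by_contra! h
  obtain hab | hab := h3.subset_pair_or_compl_subset_pair (S := S) a b fun u hu v hv huv => by
    obtain ⟨i, rfl, rfl⟩ := hcut u hu v hv huv
    have := h i huv hv
    tauto
  · exact (hab htS).elim hta htb
  · obtain ⟨x, hx, hxb⟩ := hS.exists_ne b
    obtain rfl | rfl := hab hx
    exacts [hx ha, hxb rfl]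

theorem ThreeConnected.injective_and_adj_of_cut (h3 : ThreeConnected n G)
    {S : Set (Fin n)} {f g : Fin 3 → Fin n} (hfS : ∀ i, f i ∈ S)
    {t : Fin n} (htS : t ∈ S) (htf : ∀ i, t ≠ f i) (hS : Sᶜ.Nontrivial)
    (hcut : ∀ u ∈ S, ∀ v ∉ S, G.Adj u v → ∃ i, u = f i ∧ v = g i) :
    f.Injective ∧ g.Injective ∧ ∀ i, G.Adj (f i) (g i) ∧ g i ∉ S := by
  have cover : ∀ i j : Fin 3, i ≠ j → ∃ k, ∀ l, l = k ∨ l = i ∨ l = j := by decide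
  have avoiding {a b : Fin n} := h3.exists_cut_edge_avoiding htS hS hcut (a := a) (b := b)
  have hg : ∀ i, G.Adj (f i) (g i) ∧ g i ∉ S := fun i => by
    obtain ⟨l, hl, hlS, h₁, h₂, -⟩ := avoiding (hfS (i + 1)) (htf (i + 1)) (htf (i + 2))
    obtain rfl : l = i := by
      have : ∀ i l : Fin 3, l = i ∨ l = i + 1 ∨ l = i + 2 := by decide
      obtain rfl | rfl | rfl := this i l
      exacts [rfl, (h₁ rfl).elim, (h₂ rfl).elim]
    exact ⟨hl, hlS⟩
  refine ⟨fun i j hij => ?_, fun i j hij => ?_, hg⟩ <;> by_contra hne <;>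
    obtain ⟨k, hk⟩ := cover i j hne
  · obtain ⟨l, -, -, h₁, h₂, -⟩ := avoiding (hfS k) (htf k) (htf i)
    obtain rfl | rfl | rfl := hk l
    exacts [h₁ rfl, h₂ rfl, h₂ hij.symm]
  · obtain ⟨l, -, -, h₁, -, h₂⟩ := avoiding (hfS k) (htf k) (ne_of_mem_of_not_mem htS (hg i).2)
    obtain rfl | rfl | rfl := hk l
    exacts [h₁ rfl, h₂ rfl, h₂ hij.symm]

/-- Otherwise each end `f i` is adjacent to another one, so some `f i` is adjacent to both others
and, by cubicity, to no further vertex of `S`; then the two others separate `t` from `f i`. -/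
theorem ThreeConnected.exists_adj_not_onShortCycle_of_cut (h3 : ThreeConnected n G)
    (hc : Cubic n G) {S : Set (Fin n)} {f g : Fin 3 → Fin n} (hfS : ∀ i, f i ∈ S)
    {t : Fin n} (htS : t ∈ S) (htf : ∀ i, t ≠ f i) (hS : Sᶜ.Nontrivial)
    (hcut : ∀ u ∈ S, ∀ v ∉ S, G.Adj u v → ∃ i, u = f i ∧ v = g i) :
    ∃ u w, G.Adj u w ∧ ¬ OnShortCycle G univ u w := by
  obtain ⟨hf, hg, hfg⟩ := h3.injective_and_adj_of_cut hfS htS htf hS hcut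
  by_contra! hshort
  have hadj (i) : ∃ j ≠ i, G.Adj (f i) (f j) :=
    (hshort _ _ (hfg i).1).exists_adj_of_matching_cut hf hg hfS (fun i => (hfg i).2) hcut
  obtain ⟨i, j, k, hij, hik, hjk, hj, hk⟩ : ∃ i j k, i ≠ j ∧ i ≠ k ∧ j ≠ k ∧
      G.Adj (f i) (f j) ∧ G.Adj (f i) (f k) := by
    obtain ⟨i, hi, h0i⟩ := hadj 0
    obtain ⟨k, hk0, hki⟩ := (by decide : ∀ i : Fin 3, ∃ k, k ≠ 0 ∧ k ≠ i) i
    obtain ⟨l, hlk, hkl⟩ := hadj k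
    obtain rfl | rfl : l = 0 ∨ l = i := by omega
    exacts [⟨0, i, k, hi.symm, hk0.symm, hki.symm, h0i, hkl.symm⟩,
      ⟨l, 0, k, hi, hki.symm, hk0.symm, h0i.symm, hkl.symm⟩]
  have hi := hc.neighborSet_eq (hf.ne hjk) (ne_of_mem_of_not_mem (hfS j) (hfg i).2)
    (ne_of_mem_of_not_mem (hfS k) (hfg i).2) hj hk (hfg i).1
  have hcut' : ∀ u ∈ S \ {f i}, ∀ v ∉ S \ {f i}, G.Adj u v →
      u = f j ∨ u = f k ∨ v = f j ∨ v = f k := by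
    rintro u ⟨hu, hui⟩ v hv huv
    by_cases hvS : v ∈ S
    · obtain rfl : v = f i := by_contra fun h => hv ⟨hvS, h⟩
      obtain h | h | rfl : u ∈ ({f j, f k, g i} : Set (Fin n)) := hi ▸ huv.symm
      exacts [.inl h, .inr (.inl h), ((hfg i).2 hu).elim]
    · obtain ⟨l, rfl, rfl⟩ := hcut u hu v hvS huv
      obtain rfl | rfl | rfl : l = i ∨ l = j ∨ l = k := by omega
      exacts [(hui rfl).elim, .inl rfl, .inr (.inl rfl)]
  obtain h | h := h3.subset_pair_or_compl_subset_pair (f j) (f k) hcut'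
  · exact (h ⟨htS, htf i⟩).elim (htf j) (htf k)
  · exact (h (show f i ∉ S \ {f i} from fun h => h.2 rfl)).elim (hf.ne hij) (hf.ne hik)

theorem ThreeConnected.exists_adj_not_onShortCycle (h3 : ThreeConnected n G)
    (hc : Cubic n G) {S : Set (Fin n)} {f : Fin 3 → Fin n} (hfS : ∀ i, f i ∈ S)
    {t : Fin n} (htS : t ∈ S) (htf : ∀ i, t ≠ f i) (hS : Sᶜ.Nontrivial)
    (hinner : ∀ u ∈ S, (∀ i, u ≠ f i) → G.neighborSet u ⊆ S)
    (hf : ∀ i, ∃ x ∈ S, ∃ y ∈ S, x ≠ y ∧ G.Adj (f i) x ∧ G.Adj (f i) y) :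
    ∃ u w, G.Adj u w ∧ ¬ OnShortCycle G univ u w := by
  choose x hx y hy hxy hfx hfy using hf
  choose g _ _ hg using fun i => hc.exists_third_neighbor (hxy i) (hfx i) (hfy i)
  refine h3.exists_adj_not_onShortCycle_of_cut hc (g := g) hfS htS htf hS fun u hu v hv huv => ?_
  obtain ⟨i, rfl⟩ : ∃ i, u = f i := by
    by_contra! h
    exact hv (hinner u hu h huv)
  obtain rfl | rfl | rfl : v ∈ ({x i, y i, g i} : Set (Fin n)) := hg i ▸ huv
  exacts [(hv (hx i)).elim, (hv (hy i)).elim, ⟨i, rfl, rfl⟩]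

theorem OnShortCycle.exists_triangle_or_adj {S : Set (Fin n)} {o w t : Fin n}
    (hS : ∀ v ∈ S, v = o ∨ v = w ∨ G.Adj o v) (h : OnShortCycle G S o t) :
    (∃ s, G.Adj o s ∧ G.Adj s t) ∨ (G.Adj t w ∧ ∃ s ≠ t, G.Adj o s ∧ G.Adj s w) := by
  obtain ⟨-, -, -, ⟨x, -, h⟩ | ⟨x, -, y, hy, hxt, hyo, hox, hxy, hyt⟩⟩ := h
  · exact .inl ⟨x, h⟩
  · obtain rfl | rfl | hoy := hS y hy
    exacts [(hyo rfl).elim, .inr ⟨hyt.symm, x, hxt, hox, hxy⟩, .inl ⟨y, hoy, hyt⟩]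

theorem ThreeConnected.exists_adj_not_onShortCycle_of_triangle (h3 : ThreeConnected n G)
    (hc : Cubic n G) {S : Set (Fin n)} (hSc : Sᶜ.Nontrivial) {o p q r w : Fin n}
    (hS : ∀ v, v ∈ S ↔ v = o ∨ v = w ∨ G.Adj o v) (how : o ≠ w) (how' : ¬ G.Adj o w)
    (ho : G.neighborSet o = {p, q, r}) (hqr : q ≠ r)
    (hpq : G.Adj p q) (hqw : G.Adj q w) (hrw : G.Adj r w) :
    ∃ u w, G.Adj u w ∧ ¬ OnShortCycle G univ u w := by
  have hadj : ∀ v, G.Adj o v ↔ v = p ∨ v = q ∨ v = r := fun v => by rw [← mem_neighborSet, ho]; rfl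
  have hop : G.Adj o p := (hadj p).2 (.inl rfl)
  have hoq : G.Adj o q := (hadj q).2 (.inr (.inl rfl))
  have hor : G.Adj o r := (hadj r).2 (.inr (.inr rfl))
  have hpw : p ≠ w := fun h => how' (h ▸ hop)
  have hq := hc.neighborSet_eq hop.ne how hpw hoq.symm hpq.symm hqw
  have hpS := (hS p).2 (.inr (.inr hop))
  have hqS := (hS q).2 (.inr (.inr hoq))
  have hrS := (hS r).2 (.inr (.inr hor))
  have hoS := (hS o).2 (.inl rfl)
  have hwS := (hS w).2 (.inr (.inl rfl))
  refine h3.exists_adj_not_onShortCycle hc (f := ![p, r, w]) (t := o) ?_ hoS ?_ hSc ?_ ?_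
  · simp [Fin.forall_fin_succ, hpS, hrS, hwS]
  · simp [Fin.forall_fin_succ, hop.ne, hor.ne, how]
  · intro u hu huf
    simp only [Fin.forall_fin_succ, Matrix.cons_val_zero, Matrix.cons_val_succ] at huf
    obtain rfl | rfl : u = o ∨ u = q := by grind
    · rw [ho]
      rintro _ (rfl | rfl | rfl) <;> assumption
    · rw [hq]
      rintro _ (rfl | rfl | rfl) <;> assumption
  · simp only [Fin.forall_fin_succ, Matrix.cons_val_zero, Matrix.cons_val_succ]
    exact ⟨⟨o, hoS, q, hqS, hoq.ne, hop.symm, hpq⟩, ⟨o, hoS, w, hwS, how, hor.symm, hrw⟩,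
      ⟨q, hqS, r, hrS, hqr, hqw.symm, hrw.symm⟩, by simp⟩

theorem ThreeConnected.exists_adj_not_onShortCycle_of_common_neighbor (h3 : ThreeConnected n G)
    (hc : Cubic n G) {S : Set (Fin n)} (hSc : Sᶜ.Nontrivial) {o w : Fin n}
    (hS : ∀ v, v ∈ S ↔ v = o ∨ v = w ∨ G.Adj o v) (how : o ≠ w) (how' : ¬ G.Adj o w)
    (hadj : ∀ v, G.Adj o v → G.Adj v w) :
    ∃ u w, G.Adj u w ∧ ¬ OnShortCycle G univ u w := by
  obtain ⟨x, y, z, hxy, hxz, hyz, ho⟩ := hc.exists_neighborSet_eq o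
  have hf : ∀ i, G.Adj o (![x, y, z] i) := by
    simp [Fin.forall_fin_succ, ← mem_neighborSet, ho]
  have hoS := (hS o).2 (.inl rfl)
  have hwS := (hS w).2 (.inr (.inl rfl))
  refine h3.exists_adj_not_onShortCycle hc (fun i => (hS _).2 (.inr (.inr (hf i)))) hoS
    (fun i => (hf i).ne) hSc ?_ fun i => ⟨o, hoS, w, hwS, how, (hf i).symm, hadj _ (hf i)⟩
  intro u huS huf
  obtain rfl | rfl | hou := (hS u).1 huS
  · exact fun v hv => (hS v).2 (.inr (.inr hv))
  · rw [hc.neighborSet_eq hxy hxz hyz (hadj _ (hf 0)).symm (hadj _ (hf 1)).symm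
      (hadj _ (hf 2)).symm, ← ho]
    exact fun v hv => (hS v).2 (.inr (.inr hv))
  · obtain rfl | rfl | rfl : u ∈ ({x, y, z} : Set (Fin n)) := ho ▸ hou
    exacts [(huf 0 rfl).elim, (huf 1 rfl).elim, (huf 2 rfl).elim]

theorem Cubic.exists_mem_iff_of_ncard_eq_five (hc : Cubic n G) {S : Set (Fin n)}
    (hS : S.ncard = 5) {o : Fin n} (ho : o ∈ S) (hoS : G.neighborSet o ⊆ S) :
    ∃ w, o ≠ w ∧ ¬ G.Adj o w ∧ ∀ v, v ∈ S ↔ v = o ∨ v = w ∨ G.Adj o v := by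
  have hsub := insert_subset ho hoS
  have hcard : (S \ insert o (G.neighborSet o)).ncard = 1 := by
    rw [ncard_sdiff hsub, ncard_insert_of_notMem G.notMem_neighborSet_self, hS, hc o]
  obtain ⟨w, hw⟩ := ncard_eq_one.1 hcard
  have hw' : w ∈ S \ insert o (G.neighborSet o) := hw ▸ rfl
  refine ⟨w, fun h => hw'.2 (.inl h.symm), fun h => hw'.2 (.inr h), fun v => ?_⟩
  rw [← union_sdiff_cancel hsub, hw]
  simp [or_left_comm]

theorem ThreeConnected.exists_adj_not_onShortCycle_of_ncard_eq_five (h3 : ThreeConnected n G)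
    (hc : Cubic n G) (hn : 7 ≤ n) {S : Set (Fin n)} (hS : S.ncard = 5)
    {o : Fin n} (hoS : o ∈ S) (hshort : ∀ t, G.Adj o t → OnShortCycle G S o t) :
    ∃ u w, G.Adj u w ∧ ¬ OnShortCycle G univ u w := by
  have hSc : Sᶜ.Nontrivial := by
    rw [← one_lt_ncard_iff_nontrivial]
    have := ncard_add_ncard_compl S
    rw [Nat.card_fin] at this
    omega
  obtain ⟨w, how, how', hmem⟩ := hc.exists_mem_iff_of_ncard_eq_five hS hoS
    fun t ht => (hshort t ht).2.2.1
  have hcases t (ht : G.Adj o t) := (hshort t ht).exists_triangle_or_adj fun v => (hmem v).1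
  by_cases htri : ∃ p q, G.Adj o p ∧ G.Adj o q ∧ G.Adj p q
  · obtain ⟨p, q, hop, hoq, hpq⟩ := htri
    obtain ⟨r, hpr, hqr, ho⟩ := hc.exists_third_neighbor hpq.ne hop hoq
    have hor : G.Adj o r := by simp [← mem_neighborSet, ho]
    have hpr' : ¬ G.Adj p r := fun h =>
      hqr (h3.eq_of_common_neighbors hc (by omega) hop hoq hpq hor h)
    have hqr' : ¬ G.Adj q r := fun h =>
      hpr (h3.eq_of_common_neighbors hc (by omega) hoq hop hpq.symm hor h)
    obtain ⟨s, hos, hsr⟩ | ⟨hrw, s, hsr, hos, hsw⟩ := hcases r hor <;>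
      obtain rfl | rfl | rfl : s ∈ ({p, q, r} : Set (Fin n)) := ho ▸ hos
    · exact (hpr' hsr).elim
    · exact (hqr' hsr).elim
    · exact hsr.ne.irrefl.elim
    · exact h3.exists_adj_not_onShortCycle_of_triangle hc hSc hmem how how'
        (insert_comm _ _ _ ▸ ho) hpr hpq.symm hsw hrw
    · exact h3.exists_adj_not_onShortCycle_of_triangle hc hSc hmem how how' ho hqr hpq hsw hrw
    · exact (hsr rfl).elim
  · refine h3.exists_adj_not_onShortCycle_of_common_neighbor hc hSc hmem how how' fun v hv => ?_
    obtain ⟨s, hos, hsv⟩ | ⟨hvw, -⟩ := hcases v hv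
    exacts [(htri ⟨s, v, hos, hv, hsv⟩).elim, hvw]

theorem ThreeConnected.exists_adj_not_onShortCycle_window (h3 : ThreeConnected n G)
    (hc : Cubic n G) (hn : 7 ≤ n) :
    ∃ u w, G.Adj u w ∧ ∀ i, ¬ OnShortCycle G (window n 5 i) u w := by
  by_cases h : ∃ t, G.Adj ⟨0, by omega⟩ t ∧ ¬ OnShortCycle G {v | v.val < 5} ⟨0, by omega⟩ t
  · obtain ⟨t, ht, hshort⟩ := h
    refine ⟨_, t, ht, fun i hi => hshort (hi.mono fun v hv => ?_)⟩
    have := hi.2.1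
    simp only [window, mem_ofPred_eq] at this hv ⊢
    omega
  · push Not at h
    have hcard : {v : Fin n | v.val < 5}.ncard = 5 := by
      rw [ncard_eq_toFinset_card', toFinset_ofPred, Fin.card_filter_val_lt]
      omega
    obtain ⟨u, w, huw, hshort⟩ :=
      h3.exists_adj_not_onShortCycle_of_ncard_eq_five hc hn hcard (by simp) h
    exact ⟨u, w, huw, fun i hi => hshort (hi.mono (subset_univ _))⟩

theorem CoevalWithCycle.exists_onShortCycle_window {r v : Fin n} {c : G.Walk r r} (hc : c.IsCycle)
    (hcv : CoevalWithCycle n 5 c v) (hv : v ∉ c.support) :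
    ∃ i, ∀ u w, s(u, w) ∈ c.edges → OnShortCycle G (window n 5 i) u w := by
  obtain ⟨i, -, -, hvi, hi⟩ := hcv
  refine ⟨i, fun u w => OnShortCycle.of_mem_edges hc ?_ hi⟩
  have hcard : (insert v c.support.tail.toFinset).card = c.length + 1 := by
    rw [Finset.card_insert_of_notMem fun h => hv (List.mem_of_mem_tail (List.mem_toFinset.1 h)),
      List.toFinset_card_of_nodup hc.support_nodup, List.length_tail, Walk.length_support,
      Nat.add_sub_cancel]
  have hsub : (insert v c.support.tail.toFinset).map Fin.valEmbedding ⊆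
      Finset.Ico (i - 5) i := by
    intro j hj
    simp only [Finset.mem_map, Finset.mem_insert, List.mem_toFinset] at hj
    obtain ⟨u, hu, rfl⟩ := hj
    have hui : u ∈ window n 5 i := hu.elim (· ▸ hvi) fun hu => hi u (List.mem_of_mem_tail hu)
    simp only [window, mem_ofPred_eq] at hui
    simp only [Fin.valEmbedding_apply, Finset.mem_Ico]
    omega
  have := Finset.card_le_card hsub
  rw [Finset.card_map, hcard, Nat.card_Ico] at this
  omega

end Cubic

section Topology

variable {E : Type*} [NormedAddCommGroup E] [NormedSpace ℝ E]

theorem isPreconnected_ball_diff_singleton (hE : 1 < Module.rank ℝ E) (c : E) (r : ℝ) (p : E) :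
    IsPreconnected (Metric.ball c r \ {p}) := by
  obtain hr | hr := le_or_gt r 0
  · simp [Metric.ball_eq_empty.2 hr, isPreconnected_empty]
  let e := OpenPartialHomeomorph.univBall c r
  have hinj : Function.Injective e := by
    simpa [e, injOn_univ] using e.injOn
  have himage : e '' (e ⁻¹' {p})ᶜ = Metric.ball c r \ {p} := by
    rw [image_compl_preimage]
    congr 1
    simpa only [e, OpenPartialHomeomorph.univBall_source, image_univ,
      OpenPartialHomeomorph.univBall_target c hr] using e.image_source_eq_target
  rw [← himage]
  exact ((subsingleton_singleton.preimage hinj).countable.isConnected_compl_of_one_lt_rank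
    hE).isPreconnected.image _ (OpenPartialHomeomorph.continuous_univBall c r).continuousOn

theorem exists_lt_lt_of_infinite {α : Type*} [LinearOrder α] {s : Set α} (hs : s.Infinite) :
    ∃ a ∈ s, ∃ b ∈ s, ∃ c ∈ s, a < b ∧ b < c := by
  obtain ⟨t, hts, ht⟩ := hs.exists_subset_card_eq 3
  let f := t.orderEmbOfFin ht
  have hf i : f i ∈ s := hts (t.orderEmbOfFin_mem ht i)
  exact ⟨f 0, hf 0, f 1, hf 1, f 2, hf 2, f.strictMono (by decide), f.strictMono (by decide)⟩

/-- Removing from a ball contained in the image a point with an intermediate parameter would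
disconnect it. -/
theorem interior_image_eq_empty (hE : 1 < Module.rank ℝ E) {γ : ℝ → E} {K : Set ℝ}
    (hK : IsCompact K) (hγ : ContinuousOn γ K) (hinj : InjOn γ K) : interior (γ '' K) = ∅ := by
  by_contra! ⟨c, hc⟩
  obtain ⟨r, hr, hball⟩ := Metric.mem_nhds_iff.1 (mem_interior_iff_mem_nhds.1 hc)
  have : Nontrivial E := (rank_pos_iff_nontrivial (R := ℝ)).1 (zero_lt_one.trans hE)
  have := Module.punctured_nhds_neBot ℝ E c
  have hinf : (K ∩ γ ⁻¹' Metric.ball c r).Infinite := by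
    refine Infinite.of_image γ ?_
    rw [image_inter_preimage, inter_eq_right.2 hball]
    exact infinite_of_mem_nhds c (Metric.ball_mem_nhds c hr)
  obtain ⟨s, hs, m, hm, t, ht, hsm, hmt⟩ := exists_lt_lt_of_infinite hinf
  have hcover : Metric.ball c r \ {γ m} ⊆ γ '' (K ∩ Iic m) ∪ γ '' (K ∩ Ici m) := by
    rw [← image_union, ← inter_union_distrib_left, Iic_union_Ici, inter_univ]
    exact sdiff_subset.trans hball
  have hclosed {C : Set ℝ} (hC : IsClosed C) : IsClosed (γ '' (K ∩ C)) :=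
    ((hK.inter_right hC).image_of_continuousOn (hγ.mono inter_subset_left)).isClosed
  obtain ⟨x, ⟨-, hx⟩, ⟨a, ⟨haK, ham⟩, rfl⟩, b, ⟨hbK, hmb⟩, hba⟩ :=
    isPreconnected_closed_iff.1 (isPreconnected_ball_diff_singleton hE c r (γ m)) _ _
      (hclosed isClosed_Iic) (hclosed isClosed_Ici) hcover
      ⟨γ s, ⟨hs.2, hinj.ne hs.1 hm.1 hsm.ne⟩, s, ⟨hs.1, hsm.le⟩, rfl⟩
      ⟨γ t, ⟨ht.2, hinj.ne ht.1 hm.1 hmt.ne'⟩, t, ⟨ht.1, hmt.le⟩, rfl⟩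
  obtain rfl := hinj hbK haK hba
  exact hx (congrArg γ (le_antisymm ham hmb))

/-- Inversion in the unit sphere around `p`, recentred so that `p` is moved to the origin; the value
at `p` itself is the junk value `0`. Mathlib's `EuclideanGeometry.inversion` needs an inner product,
whereas the plane here carries the sup norm. -/
noncomputable def inversion (p x : E) : E := (‖x - p‖ ^ 2)⁻¹ • (x - p)

theorem norm_inversion (p x : E) : ‖inversion p x‖ = ‖x - p‖⁻¹ := by
  rw [inversion, norm_smul, norm_inv, norm_pow, norm_norm, sq, mul_inv, mul_assoc]
  obtain h | h := eq_or_ne ‖x - p‖ 0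
  · simp [h]
  · rw [inv_mul_cancel₀ h, mul_one]

theorem inversion_zero_inversion (p x : E) : inversion 0 (inversion p x) = x - p := by
  rw [inversion, sub_zero, norm_inversion, inversion, smul_smul]
  obtain h | h := eq_or_ne ‖x - p‖ 0
  · simp [norm_eq_zero.1 h]
  · rw [inv_pow, inv_inv, mul_inv_cancel₀ (pow_ne_zero 2 h), one_smul]

theorem inversion_injective (p : E) : Function.Injective (inversion p) := fun x y h => by
  simpa [inversion_zero_inversion] using congrArg (inversion 0) h

theorem continuousOn_inversion (p : E) : ContinuousOn (inversion p) {p}ᶜ := by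
  have hsub : ContinuousOn (fun x : E => x - p) {p}ᶜ := (continuous_sub_right p).continuousOn
  refine ((hsub.norm.pow 2).inv₀ fun x hx => ?_).smul hsub
  exact pow_ne_zero 2 (norm_ne_zero_iff.2 (sub_ne_zero.2 hx))

theorem not_isBounded_inversion_image [Nontrivial E] {p : E} {U : Set E} (hU : U ∈ nhds p) :
    ¬ Bornology.IsBounded (inversion p '' (U \ {p})) := by
  intro hb
  have := Module.punctured_nhds_neBot ℝ E p
  have htendsto : Filter.Tendsto (inversion p) (nhdsWithin p {p}ᶜ) (Bornology.cobounded E) := by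
    rw [← tendsto_norm_atTop_iff_cobounded]
    simp only [norm_inversion]
    exact (tendsto_norm_sub_self_nhdsNE p).inv_tendsto_nhdsGT_zero
  have houtside : ∀ᶠ x in nhdsWithin p {p}ᶜ, inversion p x ∉ inversion p '' (U \ {p}) :=
    htendsto (Bornology.isBounded_def.1 hb)
  have hinside : ∀ᶠ x in nhdsWithin p {p}ᶜ, x ∈ U \ {p} := sdiff_mem_nhdsWithin_compl hU {p}
  obtain ⟨x, hx, hxU⟩ := (houtside.and hinside).exists
  exact hx (mem_image_of_mem _ hxU)

end Topology

section Drawing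

variable {n : ℕ} {G : SimpleGraph (Fin n)} {D : RawDrawing n}

theorem one_lt_rank_pt : 1 < Module.rank ℝ Pt := by
  rw [rank_prod', Module.rank_self]
  norm_num

theorem arcBody_comp_one_sub (γ : ℝ → Pt) : arcBody (fun t => γ (1 - t)) = arcBody γ := by
  simp only [arcBody]
  rw [← Function.comp_def γ, image_comp, image_const_sub_Icc, sub_self, sub_zero]

theorem IsArcFrom.isCompact_arcBody {γ : ℝ → Pt} {a b : Pt} (h : IsArcFrom γ a b) :
    IsCompact (arcBody γ) :=
  isCompact_Icc.image_of_continuousOn h.1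

theorem IsArcFrom.arcBody_subset {γ : ℝ → Pt} {a b : Pt} (h : IsArcFrom γ a b) :
    arcBody γ ⊆ {a, b} ∪ arcInterior γ := by
  rw [← h.2.2.1, ← h.2.2.2, ← image_pair, arcInterior, ← image_union,
    union_comm, Ioo_union_both zero_le_one]
  rfl

theorem arcBody_subset_drawingImage {S : Set (Fin n)} {u v : Fin n} (hu : u ∈ S) (hv : v ∈ S)
    (huv : G.Adj u v) : arcBody (D.curve u v) ⊆ drawingImage n G S D := fun p hp => by
  simp only [drawingImage, mem_union, mem_iUnion]
  exact .inr ⟨u, v, hu, hv, huv, hp⟩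

theorem IsExternalCycle.exists_mem_cycleImage {r : Fin n} {c : G.Walk r r}
    (hc : IsExternalCycle n G D c) {A : Set Pt} (hA : IsPreconnected A)
    (hunbdd : ¬ Bornology.IsBounded A) {a : Pt} (haA : a ∈ A) (ha : a ∈ drawingImage n G univ D) :
    ∃ y ∈ A, y ∈ cycleImage n D c := by
  by_contra! h
  exact (hc.2 a ha).elim (h a haA) fun hin =>
    hunbdd (hin.2.subset (hA.subset_connectedComponentIn haA h))

/-- The image of a drawing under a map of the plane. -/
def RawDrawing.map (φ : Pt → Pt) (D : RawDrawing n) : RawDrawing n where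
  pos v := φ (D.pos v)
  curve u v t := φ (D.curve u v t)

theorem IsPlanarDrawingOn.map {S : Set (Fin n)} {P : Set Pt} (hD : IsPlanarDrawingOn n G S P D)
    {φ : Pt → Pt} (hφ : φ.Injective)
    (hcont : ∀ u ∈ S, ∀ v ∈ S, G.Adj u v → ContinuousOn φ (arcBody (D.curve u v))) :
    IsPlanarDrawingOn n G S (φ '' P) (D.map φ) where
  pos_mem v hv := mem_image_of_mem φ (hD.pos_mem v hv)
  pos_inj := hφ.comp_injOn hD.pos_inj
  curve_symm u v := funext fun t => congrArg φ (congrFun (hD.curve_symm u v) t)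
  arc u hu v hv huv := by
    obtain ⟨hγ, hinj, h₀, h₁⟩ := hD.arc u hu v hv huv
    exact ⟨(hcont u hu v hv huv).comp hγ (mapsTo_image _ _), hφ.comp_injOn hinj,
      congrArg φ h₀, congrArg φ h₁⟩
  vertex_off_arc u hu v hv huv w hw := by
    rintro ⟨t, ht, h⟩
    exact hD.vertex_off_arc u hu v hv huv w hw ⟨t, ht, hφ h⟩
  no_cross u hu v hv x hx y hy huv hxy hne := by
    rw [← disjoint_iff_inter_eq_empty, arcInterior, arcInterior]
    simp only [RawDrawing.map]
    rw [← Function.comp_def φ, image_comp, ← Function.comp_def φ, image_comp,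
      disjoint_image_iff hφ, disjoint_iff_inter_eq_empty]
    exact hD.no_cross u hu v hv x hx y hy huv hxy hne

theorem IsPlanarDrawing.isDrawing (hD : IsPlanarDrawing n G univ D) : IsDrawing n G D where
  pos_inj := injOn_univ.1 hD.pos_inj
  curve_symm := hD.curve_symm
  arc u v huv := hD.arc u trivial v trivial huv
  vertex_off_arc u v huv w := hD.vertex_off_arc u trivial v trivial huv w trivial

theorem IsPlanarDrawing.notMem_arcBody (hD : IsPlanarDrawing n G univ D) {u w x y : Fin n}
    (huw : G.Adj u w) (hxy : G.Adj x y) (hne : s(u, w) ≠ s(x, y)) {q : Pt}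
    (hq : q ∈ arcInterior (D.curve u w)) : q ∉ arcBody (D.curve x y) := by
  intro h
  have hvertex (v : Fin n) : q ≠ D.pos v := fun hv =>
    hD.vertex_off_arc u trivial w trivial huw v trivial (hv ▸ hq)
  obtain (rfl | rfl) | h := (hD.arc x trivial y trivial hxy).arcBody_subset h
  · exact hvertex x rfl
  · exact hvertex y rfl
  · exact (hD.no_cross u trivial w trivial x trivial y trivial huw hxy hne).le ⟨hq, h⟩

theorem IsPlanarDrawing.exists_eventually_notMem_arcBody (hD : IsPlanarDrawing n G univ D)
    {u w : Fin n} (huw : G.Adj u w) : ∃ q ∈ arcBody (D.curve u w), ∀ᶠ z in nhds q,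
      ∀ x y, G.Adj x y → s(u, w) ≠ s(x, y) → z ∉ arcBody (D.curve x y) := by
  refine ⟨D.curve u w (1 / 2), mem_image_of_mem _ (by norm_num), ?_⟩
  simp only [Filter.eventually_all]
  exact fun x y hxy hne =>
    (hD.arc x trivial y trivial hxy).isCompact_arcBody.isClosed.isOpen_compl.mem_nhds
      (hD.notMem_arcBody huw hxy hne (mem_image_of_mem _ (by norm_num)))

/-- Invert the plane at a point `p` off the drawing but next to an interior point of `u w`: a ball
around `p` meeting no other edge is sent to an unbounded connected set, which has to meet every
external cycle. -/
theorem IsPlanarDrawing.exists_forall_isExternalCycle_mem_edges (hD : IsPlanarDrawing n G univ D)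
    {u w : Fin n} (huw : G.Adj u w) : ∃ D' : RawDrawing n, IsPlanarDrawing n G univ D' ∧
      ∀ (r : Fin n) (c : G.Walk r r), IsExternalCycle n G D' c → s(u, w) ∈ c.edges := by
  obtain ⟨q, hq, hnhds⟩ := hD.exists_eventually_notMem_arcBody huw
  obtain ⟨ε, hε, hball⟩ := Metric.eventually_nhds_iff_ball.1 hnhds
  obtain ⟨hγ, hinj, -, -⟩ := hD.arc u trivial w trivial huw
  obtain ⟨p, hp, hpuw⟩ : ∃ p ∈ Metric.ball q ε, p ∉ arcBody (D.curve u w) := by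
    by_contra! h
    have := interior_maximal h Metric.isOpen_ball (Metric.mem_ball_self hε)
    rwa [arcBody, interior_image_eq_empty one_lt_rank_pt isCompact_Icc hγ hinj] at this
  have hoff : ∀ x y, G.Adj x y → p ∉ arcBody (D.curve x y) := fun x y hxy => by
    by_cases hne : s(u, w) = s(x, y)
    · obtain ⟨rfl, rfl⟩ | ⟨rfl, rfl⟩ := Sym2.eq_iff.1 hne
      · exact hpuw
      · rwa [hD.curve_symm, arcBody_comp_one_sub]
    · exact hball p hp x y hxy hne
  have hcont x (_ : x ∈ univ) y (_ : y ∈ univ) (hxy : G.Adj x y) :=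
    (continuousOn_inversion p).mono fun z hz (hzp : z = p) => hoff x y hxy (hzp ▸ hz)
  have hinv := inversion_injective p
  refine ⟨D.map (inversion p), ?_, fun r c hc => ?_⟩
  · exact { hD.map hinv hcont with pos_mem := fun _ _ => mem_univ _ }
  have hqD : inversion p q ∈ drawingImage n G univ (D.map (inversion p)) := by
    obtain ⟨t, ht, rfl⟩ := hq
    exact arcBody_subset_drawingImage (mem_univ u) (mem_univ w) huw ⟨t, ht, rfl⟩
  obtain ⟨_, ⟨z, ⟨hz, -⟩, rfl⟩, x, y, hxy, t, ht, hzt⟩ := hc.exists_mem_cycleImage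
    ((isPreconnected_ball_diff_singleton one_lt_rank_pt q ε p).image _
      ((continuousOn_inversion p).mono fun _ h => h.2))
    (not_isBounded_inversion_image (Metric.isOpen_ball.mem_nhds hp))
    (mem_image_of_mem _ ⟨Metric.mem_ball_self hε, fun h => hpuw (h ▸ hq)⟩) hqD
  by_contra hne
  exact hball z hz x y (c.adj_of_mem_edges hxy) (fun h => hne (h ▸ hxy)) ⟨t, ht, hinv hzt⟩

end Drawing

section StraightLine

variable {R : Type*} [CommRing R]

/-- Twice the signed area of the triangle `a b c`: its sign tells on which side of the line `a b`
the point `c` lies. -/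
def orient (a b c : R × R) : R := (b.1 - a.1) * (c.2 - a.2) - (b.2 - a.2) * (c.1 - a.1)

theorem orient_map {S : Type*} [CommRing S] (f : R →+* S) (a b c : R × R) :
    orient (Prod.map f f a) (Prod.map f f b) (Prod.map f f c) = f (orient a b c) := by
  simp [orient]

theorem orient_left (a b : R × R) : orient a b a = 0 := by
  simp [orient]

theorem orient_right (a b : R × R) : orient a b b = 0 := by
  simp only [orient]
  ring

theorem orient_lineMap (a b c d : R × R) (t : R) :
    orient a b (AffineMap.lineMap c d t) = (1 - t) * orient a b c + t * orient a b d := by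
  simp only [orient, AffineMap.lineMap_apply_module, Prod.fst_add, Prod.snd_add, Prod.smul_fst,
    Prod.smul_snd, smul_eq_mul]
  ring

/-- The points `c` and `d` lie in a common closed half-plane bounded by the line `a b`, and not
both on that line. -/
def SameSide [LE R] (a b c d : R × R) : Prop :=
  0 ≤ orient a b c * orient a b d ∧ (orient a b c ≠ 0 ∨ orient a b d ≠ 0)

theorem SameSide.lineMap_ne_lineMap [LinearOrder R] [IsStrictOrderedRing R] {a b c d : R × R}
    (h : SameSide a b c d) (s : R) {t : R} (ht : t ∈ Ioo 0 1) :
    AffineMap.lineMap (k := R) a b s ≠ AffineMap.lineMap c d t := by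
  intro heq
  have hline := orient_lineMap a b c d t
  rw [← heq, orient_lineMap, orient_left, orient_right, mul_zero, mul_zero, add_zero] at hline
  obtain ⟨hcd, hne⟩ := h
  generalize orient a b c = x at *
  generalize orient a b d = y at *
  have ht' : 0 < 1 - t := sub_pos.2 ht.2
  obtain hx | hy := hne
  · linarith [mul_pos ht' (sq_pos_of_ne_zero hx), mul_nonneg ht.1.le hcd,
      show (1 - t) * x ^ 2 + t * (x * y) = 0 by linear_combination -x * hline]
  · linarith [mul_pos ht.1 (sq_pos_of_ne_zero hy), mul_nonneg ht'.le hcd,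
      show (1 - t) * (x * y) + t * y ^ 2 = 0 by linear_combination -y * hline]

variable {n : ℕ} {G : SimpleGraph (Fin n)} {p : Fin n → Pt}

/-- The straight-line drawing with vertex positions `p`. -/
noncomputable def straightDrawing (p : Fin n → Pt) : RawDrawing n where
  pos := p
  curve u v t := AffineMap.lineMap (p u) (p v) t

theorem isDrawing_straightDrawing (hp : p.Injective)
    (hgen : ∀ u v w, u ≠ v → w ≠ u → w ≠ v → orient (p u) (p v) (p w) ≠ 0) :
    IsDrawing n G (straightDrawing p) where
  pos_inj := hp
  curve_symm u v := funext fun t => (AffineMap.lineMap_apply_one_sub (p u) (p v) t).symm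
  arc u v huv := ⟨AffineMap.lineMap_continuous.continuousOn,
    (AffineMap.lineMap_injective ℝ (hp.ne huv.ne)).injOn, AffineMap.lineMap_apply_zero _ _,
    AffineMap.lineMap_apply_one _ _⟩
  vertex_off_arc u v huv w := by
    rintro ⟨t, ht, htw⟩
    change AffineMap.lineMap (p u) (p v) t = p w at htw
    have hinj := AffineMap.lineMap_injective ℝ (hp.ne huv.ne)
    obtain rfl | hwu := eq_or_ne w u
    · exact ht.1.ne' (hinj (htw.trans (AffineMap.lineMap_apply_zero _ _).symm))
    obtain rfl | hwv := eq_or_ne w v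
    · exact ht.2.ne (hinj (htw.trans (AffineMap.lineMap_apply_one _ _).symm))
    refine hgen u v w huv.ne hwu hwv ?_
    rw [← htw, orient_lineMap, orient_left, orient_right, mul_zero, mul_zero, add_zero]

theorem IsExternalCycle.mem_support_of_forall_lt {r : Fin n} {c : G.Walk r r}
    (hc : IsExternalCycle n G (straightDrawing p) c) (L : Pt →L[ℝ] ℝ) {m : Fin n}
    (hm : ∀ k ≠ m, L (p k) < L (p m)) : m ∈ c.support := by
  have : Nontrivial (Fin n) := ⟨r, c.snd, (c.adj_snd hc.1.not_nil).ne⟩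
  obtain ⟨k, hk⟩ := exists_ne m
  have hL : Function.Surjective L := LinearMap.surjective (f := L.toLinearMap) fun h => by
    have := hm k hk
    simp [← ContinuousLinearMap.coe_coe, h] at this
  have hunbdd : ¬ Bornology.IsBounded (L ⁻¹' Ici (L (p m))) := fun h => by
    have := (L.lipschitz.isBounded_image h).bddAbove
    rw [image_preimage_eq _ hL] at this
    exact not_bddAbove_Ici _ this
  obtain ⟨_, hy, u, v, huv, t, ht, rfl⟩ := hc.exists_mem_cycleImage
    ((convex_Ici _).is_linear_preimage L.isLinear).isPreconnected hunbdd
    (a := p m) (le_refl (L (p m))) (.inl ⟨m, trivial, rfl⟩)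
  by_contra hmc
  have hlt : ∀ k ∈ c.support, L (p k) < L (p m) := fun k hk => hm k fun h => hmc (h ▸ hk)
  have hlt_edge : AffineMap.lineMap (p u) (p v) t ∈ {y | L y < L (p m)} :=
    (convex_halfSpace_lt L.isLinear _).lineMap_mem
      (hlt u (c.fst_mem_support_of_mem_edges huv)) (hlt v (c.snd_mem_support_of_mem_edges huv)) ht
  exact (mem_ofPred_eq ▸ hlt_edge).not_ge hy

end StraightLine

section SixVertices

/-- Integer positions for the drawings of graphs on six vertices. The middle four lie on the
parabola `y = -x ^ 2`; the first and the last lie so high that no segment between two of the middle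
ones hides any of them from either. Two segments then cross only if one ends at the first point and
the other at the last, or if they are the two diagonals of the middle quadrilateral. -/
def hexPoint : Fin 6 → ℤ × ℤ := ![(-1, 20), (-3, -9), (-1, -1), (1, -1), (3, -9), (1, 20)]

theorem hexPoint_injective : Function.Injective hexPoint := by decide

theorem orient_hexPoint_ne_zero :
    ∀ i j k, i ≠ j → k ≠ i → k ≠ j → orient (hexPoint i) (hexPoint j) (hexPoint k) ≠ 0 := by
  decide

set_option maxRecDepth 100000 in
theorem sameSide_hexPoint :
    ∀ i j k l : Fin 6, i ≠ j → k ≠ l → s(i, j) ≠ s(k, l) → s(i, j) ≠ s(1, 3) → s(k, l) ≠ s(1, 3) →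
      SameSide (hexPoint i) (hexPoint j) (hexPoint k) (hexPoint l) ∨
      SameSide (hexPoint k) (hexPoint l) (hexPoint i) (hexPoint j) ∨
      0 ∈ s(i, j) ∧ 5 ∈ s(k, l) ∨ 5 ∈ s(i, j) ∧ 0 ∈ s(k, l) := by
  unfold SameSide
  decide

/-- The points `hexPoint` in the real plane. -/
def hexPos (i : Fin 6) : Pt := Prod.map (Int.castRingHom ℝ) (Int.castRingHom ℝ) (hexPoint i)

theorem hexPos_injective : Function.Injective hexPos :=
  (Int.cast_injective.prodMap Int.cast_injective).comp hexPoint_injective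

theorem orient_hexPos (i j k : Fin 6) :
    orient (hexPos i) (hexPos j) (hexPos k) =
      (orient (hexPoint i) (hexPoint j) (hexPoint k) : ℤ) :=
  orient_map _ _ _ _

theorem sameSide_hexPos {i j k l : Fin 6}
    (h : SameSide (hexPoint i) (hexPoint j) (hexPoint k) (hexPoint l)) :
    SameSide (hexPos i) (hexPos j) (hexPos k) (hexPos l) := by
  simp only [SameSide, orient_hexPos]
  exact_mod_cast h

theorem zero_five_mem_of_lineMap_hexPos_eq {i j k l : Fin 6} (hij : i ≠ j) (hkl : k ≠ l)
    (hne : s(i, j) ≠ s(k, l)) (hij' : s(i, j) ≠ s(1, 3)) (hkl' : s(k, l) ≠ s(1, 3)) {s t : ℝ}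
    (hs : s ∈ Ioo 0 1) (ht : t ∈ Ioo 0 1)
    (h : AffineMap.lineMap (hexPos i) (hexPos j) s = AffineMap.lineMap (hexPos k) (hexPos l) t) :
    0 ∈ s(i, j) ∧ 5 ∈ s(k, l) ∨ 5 ∈ s(i, j) ∧ 0 ∈ s(k, l) := by
  obtain hside | hside | hends := sameSide_hexPoint i j k l hij hkl hne hij' hkl'
  · exact absurd h ((sameSide_hexPos hside).lineMap_ne_lineMap s ht)
  · exact absurd h.symm ((sameSide_hexPos hside).lineMap_ne_lineMap t hs)
  · exact hends

theorem hexPos_snd_sub_fst_lt {i : Fin 6} (hi : i ≠ 0) :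
    (hexPos i).2 - (hexPos i).1 < (hexPos 0).2 - (hexPos 0).1 := by
  have h : ∀ i ≠ 0, (hexPoint i).2 - (hexPoint i).1 < (hexPoint 0).2 - (hexPoint 0).1 := by decide
  have := h i hi
  simp only [hexPos, Prod.map_fst, Prod.map_snd, eq_intCast]
  exact_mod_cast this

theorem hexPos_snd_add_fst_lt {i : Fin 6} (hi : i ≠ 5) :
    (hexPos i).2 + (hexPos i).1 < (hexPos 5).2 + (hexPos 5).1 := by
  have h : ∀ i ≠ 5, (hexPoint i).2 + (hexPoint i).1 < (hexPoint 5).2 + (hexPoint 5).1 := by decide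
  have := h i hi
  simp only [hexPos, Prod.map_fst, Prod.map_snd, eq_intCast]
  exact_mod_cast this

theorem exists_perm_fin_six :
    ∀ a b : Fin 6, a ≠ b → a ≠ 0 → a ≠ 5 → b ≠ 0 → b ≠ 5 →
      ∃ ρ : Equiv.Perm (Fin 6), ρ 0 = 0 ∧ ρ 5 = 5 ∧ ρ a = 1 ∧ ρ b = 3 := by
  have h : ∀ a b : Fin 6, a ≠ b → a ≠ 0 → a ≠ 5 → b ≠ 0 → b ≠ 5 →
      letI ρ := (Equiv.swap a 1).trans (Equiv.swap (Equiv.swap a 1 b) 3)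
      ρ 0 = 0 ∧ ρ 5 = 5 ∧ ρ a = 1 ∧ ρ b = 3 := by decide
  exact fun a b hab ha₀ ha₅ hb₀ hb₅ => ⟨_, h a b hab ha₀ ha₅ hb₀ hb₅⟩

theorem Cubic.exists_not_adj {n : ℕ} {G : SimpleGraph (Fin n)} (hc : Cubic n G) (hn : 6 ≤ n)
    {p q : Fin n} (hpq : ¬ G.Adj p q) :
    ∃ a b, a ≠ b ∧ a ≠ p ∧ a ≠ q ∧ b ≠ p ∧ b ≠ q ∧ ¬ G.Adj a b := by
  obtain ⟨a, ha⟩ : (G.neighborSet p).Nonempty := nonempty_of_ncard_ne_zero (by simp [hc p])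
  by_contra! hall
  have hap : a ≠ p := ha.ne'
  have haq : a ≠ q := by
    rintro rfl
    exact hpq ha
  have hcover : (univ : Set (Fin n)) ⊆ G.neighborSet a ∪ {a, q} := fun b _ => by
    obtain rfl | hba := eq_or_ne a b
    · simp
    obtain rfl | hbp := eq_or_ne b p
    · exact .inl ha.symm
    obtain rfl | hbq := eq_or_ne b q
    · simp
    · exact .inl (hall a b hba hap haq hbp hbq)
  have hcard := (ncard_le_ncard hcover).trans (ncard_union_le _ _)
  have hpair := ncard_insert_le a {q}
  rw [ncard_univ, Nat.card_fin, hc a] at hcard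
  rw [ncard_singleton] at hpair
  omega

theorem exists_isDrawing_fin_six {G : SimpleGraph (Fin 6)} (hc : Cubic 6 G) (h05 : ¬ G.Adj 0 5) :
    ∃ D, IsDrawing 6 G D ∧
      (∀ r (c : G.Walk r r), IsExternalCycle 6 G D c → 0 ∈ c.support ∧ 5 ∈ c.support) ∧
      ∀ u v x y, G.Adj u v → G.Adj x y → s(u, v) ≠ s(x, y) →
        (arcInterior (D.curve u v) ∩ arcInterior (D.curve x y)).Nonempty →
        0 ∈ s(u, v) ∧ 5 ∈ s(x, y) ∨ 5 ∈ s(u, v) ∧ 0 ∈ s(x, y) := by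
  obtain ⟨a, b, hab, ha₀, ha₅, hb₀, hb₅, hadj⟩ := hc.exists_not_adj le_rfl h05
  obtain ⟨ρ, hρ₀, hρ₅, hρa, hρb⟩ := exists_perm_fin_six a b hab ha₀ ha₅ hb₀ hb₅
  refine ⟨straightDrawing (hexPos ∘ ρ),
    isDrawing_straightDrawing (hexPos_injective.comp ρ.injective) fun u v w huv hwu hwv => ?_,
    fun r c hext => ⟨?_, ?_⟩, ?_⟩
  · rw [Function.comp_apply, Function.comp_apply, Function.comp_apply, orient_hexPos]
    exact_mod_cast orient_hexPoint_ne_zero _ _ _ (ρ.injective.ne huv) (ρ.injective.ne hwu)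
      (ρ.injective.ne hwv)
  · refine hext.mem_support_of_forall_lt (.snd ℝ ℝ ℝ - .fst ℝ ℝ ℝ) fun k hk => ?_
    simpa [hρ₀] using hexPos_snd_sub_fst_lt (hρ₀ ▸ ρ.injective.ne hk)
  · refine hext.mem_support_of_forall_lt (.snd ℝ ℝ ℝ + .fst ℝ ℝ ℝ) fun k hk => ?_
    simpa [hρ₅] using hexPos_snd_add_fst_lt (hρ₅ ▸ ρ.injective.ne hk)
  · rintro u v x y huv hxy hne ⟨_, ⟨s, hs, rfl⟩, t, ht, hst⟩
    have hmap : ∀ x y, s(ρ x, ρ y) = Sym2.map ρ s(x, y) := fun _ _ => rfl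
    have hmem : ∀ {i e}, ρ i = i → (i ∈ Sym2.map ρ e ↔ i ∈ e) := fun hi =>
      Sym2.mem_map.trans
        ⟨fun ⟨_, hx, h⟩ => ρ.injective (h.trans hi.symm) ▸ hx, fun h => ⟨_, h, hi⟩⟩
    have h13 : ∀ {x y}, G.Adj x y → s(ρ x, ρ y) ≠ s(1, 3) := fun hxy h => by
      rw [← hρa, ← hρb, hmap, hmap] at h
      exact hadj (G.mem_edgeSet.1 (Sym2.map.injective ρ.injective h ▸ G.mem_edgeSet.2 hxy))
    have := zero_five_mem_of_lineMap_hexPos_eq (ρ.injective.ne huv.ne) (ρ.injective.ne hxy.ne)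
      ((Sym2.map.injective ρ.injective).ne hne) (h13 huv) (h13 hxy) hs ht hst.symm
    simpa only [hmap, hmem hρ₀, hmem hρ₅] using this

end SixVertices

theorem lt_add_of_mem_window {n ω i : ℕ} {u v : Fin n} (hu : u ∈ window n ω i)
    (hv : v ∈ window n ω i) : v.val < u.val + ω :=
  Nat.lt_of_succ_le (hv.1.trans hu.2)

/-- **Claim 1 in the appendix.** Let `G` be an `n`-vertex planar
triconnected cubic graph with `n ≥ 6` and all edges visible for window size
`ω = 5`.  Then there exists an embedding `φ'` of `G` (crossings interpreted as
dummy vertices) such that (i) the external cycle of `φ'` is not a critical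
cycle, and (ii) any two crossing edges of `φ'` are not coeval and one of them
is incident to `v₁`. -/
theorem exists_embedding_external_not_critical
    (n : ℕ) (G : SimpleGraph (Fin n)) (hn : 6 ≤ n)
    (hplanar : PlanarGraph n G) (h3 : ThreeConnected n G) (hcubic : Cubic n G)
    (hvis : Visible n 5 G) :
    ∃ D : RawDrawing n, IsDrawing n G D ∧
      (∀ (r : Fin n) (c : G.Walk r r), IsExternalCycle n G D c →
        ∀ v : Fin n, ¬ CriticalFor n 5 D c v) ∧
      (∀ u v x y : Fin n, G.Adj u v → G.Adj x y → s(u, v) ≠ s(x, y) →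
        (arcInterior (D.curve u v) ∩ arcInterior (D.curve x y)).Nonempty →
        ¬ CoevalEdges n 5 u v x y ∧
          (u = ⟨0, by omega⟩ ∨ v = ⟨0, by omega⟩ ∨
           x = ⟨0, by omega⟩ ∨ y = ⟨0, by omega⟩)) := by
  obtain rfl | hn6 := hn.eq_or_lt
  · have h05 : ¬ G.Adj 0 5 := fun h => absurd (hvis 0 5 h).2 (by decide)
    have h05win {i : ℕ} (h₀ : 0 ∈ window 6 5 i) : 5 ∉ window 6 5 i := fun h₅ =>
      absurd (lt_add_of_mem_window h₀ h₅) (by decide)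
    obtain ⟨D, hD, hext, hcross⟩ := exists_isDrawing_fin_six hcubic h05
    refine ⟨D, hD, fun r c hc v ⟨⟨i, _, _, _, hi⟩, _⟩ => ?_, fun u v x y huv hxy hne hmeet => ?_⟩
    · exact h05win (hi 0 (hext r c hc).1) (hi 5 (hext r c hc).2)
    · have hends := hcross u v x y huv hxy hne hmeet
      simp only [Sym2.mem_iff] at hends
      exact ⟨fun ⟨i, _, _, hu, hv, hx, hy⟩ => by grind, by grind⟩
  · obtain ⟨u, w, huw, hshort⟩ := h3.exists_adj_not_onShortCycle_window hcubic hn6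
    obtain ⟨D₀, hD₀⟩ := hplanar
    obtain ⟨D, hD, hext⟩ := hD₀.exists_forall_isExternalCycle_mem_edges huw
    refine ⟨D, hD.isDrawing, fun r c hc v ⟨hcv, hv, _⟩ => ?_, fun u v x y huv hxy hne hmeet => ?_⟩
    · obtain ⟨i, hi⟩ := hcv.exists_onShortCycle_window hc.1 hv
      exact hshort i (hi u w (hext r c hc))
    · exact absurd (hD.no_cross u trivial v trivial x trivial y trivial huv hxy hne)
        hmeet.ne_empty

end GraphStories
end
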